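/- arXiv:1009.1689 — 9 statements merged into one kernel-verified Lean document; each statement's English description precedes it below -/
import Mathlib

section
/- Let 0 ≤ ϑ₁ < ϑ₂ < ∞ and set ϑ = ϑ₂ − ϑ₁. For every kernel g ∈ K(I_{ϑ₁,ϑ₂}) there exist a finite family of complex numbers λ₁,…,λ_N, natural numbers k, and complex coefficients a_{ik} (finitely many nonzero) such that for all t ∈ ℝ, g(t) = Σ_{i,k} a_{ik} · θ_{λ_i}^k(t − ϑ₁). In other words, every distributed-delay kernel is a finite linear combination of time-shifted elementary distributed-delay kernels and their polynomial-weighted variants. -/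
open Complex

/-- The kernel `θ_λ^k`: `(-t)^k * exp(λ t)` on `[0, ϑ]` and `0` elsewhere. -/
noncomputable def thetaK (lam : ℂ) (ϑ : ℝ) (k : ℕ) (t : ℝ) : ℂ :=
  if t ∈ Set.Icc (0 : ℝ) ϑ then (-(t : ℂ)) ^ k * Complex.exp (lam * t) else 0

/- Expand `t = (t - s) + s` in the power and in the exponential; the sign `(-1) ^ m` is there
because `thetaK` weights the exponential by powers of `-t`. -/
theorem pow_mul_exp_eq_sum_sub (lam s t : ℂ) (n : ℕ) :
    t ^ n * exp (lam * t) = ∑ m ∈ Finset.range (n + 1),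
      (exp (lam * s) * (-1) ^ m * s ^ (n - m) * n.choose m) *
        ((-(t - s)) ^ m * exp (lam * (t - s))) := by
  have pow_expand : t ^ n =
      ∑ m ∈ Finset.range (n + 1), (t - s) ^ m * s ^ (n - m) * n.choose m := by
    rw [← add_pow, sub_add_cancel]
  have exp_split : exp (lam * t) = exp (lam * s) * exp (lam * (t - s)) := by
    rw [← exp_add, ← mul_add, add_sub_cancel]
  rw [pow_expand, exp_split, Finset.sum_mul]
  refine Finset.sum_congr rfl fun m _ ↦ ?_
  have sign_cancel : (t - s) ^ m = (-1) ^ m * (-(t - s)) ^ m := by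
    rw [← mul_pow, neg_one_mul, neg_neg]
  rw [sign_cancel]
  ring

theorem thetaK_comp_sub_eq_indicator (lam : ℂ) (a b : ℝ) (k : ℕ) :
    (fun t : ℝ ↦ thetaK lam (b - a) k (t - a)) =
      (Set.Icc a b).indicator fun t : ℝ ↦ (-((t : ℂ) - a)) ^ k * exp (lam * ((t : ℂ) - a)) := by
  funext t
  simp only [thetaK, Set.indicator_apply, Set.mem_Icc, sub_nonneg, sub_le_sub_iff_right, ofReal_sub]

theorem indicator_pow_mul_exp_mem_span_thetaK (lam : ℂ) (a b : ℝ) (n : ℕ) :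
    (Set.Icc a b).indicator (fun t : ℝ ↦ (t : ℂ) ^ n * exp (lam * t)) ∈
      Submodule.span ℂ {f | ∃ k ≤ n, f = fun t ↦ thetaK lam (b - a) k (t - a)} := by
  have expansion : (Set.Icc a b).indicator (fun t : ℝ ↦ (t : ℂ) ^ n * exp (lam * t)) =
      ∑ m ∈ Finset.range (n + 1), (exp (lam * a) * (-1) ^ m * (a : ℂ) ^ (n - m) * n.choose m) •
        fun t : ℝ ↦ thetaK lam (b - a) m (t - a) := by
    funext t
    simp only [thetaK_comp_sub_eq_indicator, Finset.sum_apply, Pi.smul_apply, smul_eq_mul]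
    by_cases ht : t ∈ Set.Icc a b
    · simpa only [Set.indicator_of_mem ht] using pow_mul_exp_eq_sum_sub lam a t n
    · simp only [Set.indicator_of_notMem ht, mul_zero, Finset.sum_const_zero]
  rw [expansion]
  exact sum_mem fun m hm ↦ Submodule.smul_mem _ _ <|
    Submodule.subset_span ⟨m, Finset.mem_range_succ_iff.mp hm, rfl⟩

theorem stmt0_general {ι : Type*} [Fintype ι] (ϑ₁ ϑ₂ : ℝ)
    (g : ℝ → ℂ) (c lam : ι → ℂ) (j : ι → ℕ)
    (hg_supp : ∀ t : ℝ, t ∉ Set.Icc ϑ₁ ϑ₂ → g t = 0)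
    (hg : ∀ t ∈ Set.Icc ϑ₁ ϑ₂, g t = ∑ i, c i * (t : ℂ) ^ (j i) * exp (lam i * t)) :
    g ∈ Submodule.span ℂ
      {f | ∃ i, ∃ k ≤ j i, f = fun t ↦ thetaK (lam i) (ϑ₂ - ϑ₁) k (t - ϑ₁)} := by
  have g_eq_sum : g = ∑ i, c i •
      (Set.Icc ϑ₁ ϑ₂).indicator fun t : ℝ ↦ (t : ℂ) ^ (j i) * exp (lam i * t) := by
    funext t
    by_cases ht : t ∈ Set.Icc ϑ₁ ϑ₂
    · simp [hg t ht, ht, mul_assoc]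
    · simp [hg_supp t ht, ht]
  rw [g_eq_sum]
  refine sum_mem fun i _ ↦ Submodule.smul_mem _ _ ?_
  refine Submodule.span_mono ?_ (indicator_pow_mul_exp_mem_span_thetaK (lam i) ϑ₁ ϑ₂ (j i))
  exact fun f hf ↦ ⟨i, hf⟩

/-- Every distributed-delay kernel `g ∈ K(I_{ϑ₁,ϑ₂})` is a finite linear combination of
time-shifted elementary distributed-delay kernels and their polynomial-weighted variants. -/
theorem stmt0 (ϑ₁ ϑ₂ : ℝ) (hϑ₁ : 0 ≤ ϑ₁) (hϑ : ϑ₁ < ϑ₂)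
    (g : ℝ → ℂ) (N : ℕ) (c lam : Fin N → ℂ) (j : Fin N → ℕ)
    (hg_supp : ∀ t : ℝ, t ∉ Set.Icc ϑ₁ ϑ₂ → g t = 0)
    (hg : ∀ t ∈ Set.Icc ϑ₁ ϑ₂,
      g t = ∑ i, c i * (t : ℂ) ^ (j i) * Complex.exp (lam i * t)) :
    ∃ (M : ℕ) (a μ : Fin M → ℂ) (k : Fin M → ℕ),
      ∀ t : ℝ, g t = ∑ i, a i * thetaK (μ i) (ϑ₂ - ϑ₁) (k i) (t - ϑ₁) := by
  obtain ⟨M, a, f, sum_eq_g⟩ :=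
    Submodule.mem_span_set'.mp (stmt0_general ϑ₁ ϑ₂ g c lam j hg_supp hg)
  choose i k _ f_eq using fun m ↦ (f m).2
  exact ⟨M, a, fun m ↦ lam (i m), k, fun t ↦ by simp [← sum_eq_g, f_eq]⟩
end

section
/- For every integrable function f : ℝ → ℂ vanishing on (−∞, 0) and every ε > 0, there exist finitely many coefficients c_{ij} ∈ ℂ and exponents λ_i ∈ ℂ with Re λ_i < 0 such that ∫₀^∞ |f(t) − Σ_{i,j} c_{ij} t^j exp(λ_i t)| dt ≤ ε. That is, the lumped-system kernels (finite linear combinations of t^j exp(λ t) with Re λ < 0 on [0, ∞)) are dense in L¹(ℝ₊). -/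
open Complex MeasureTheory

open Filter Topology
open scoped ENNReal

/-!
Under the substitution `x = exp (-t)`, a continuous compactly supported `g` becomes
`exp (-t) • h (exp (-t))` on `[0, ∞)`, where `h x = x⁻¹ • g (-log x)` is continuous on `[0, 1]`
because it vanishes near `0`. If a polynomial `q` is uniformly `δ`-close to `h` on `[0, 1]`, then
the exponential sum `exp (-t) • q (exp (-t))` differs from `g` by at most `δ * exp (-t)`: dividing
by `x` before approximating turns a uniform estimate into one with an integrable weight.
The density of continuous compactly supported functions in `Lᵖ` concludes.
-/

section ExponentialApproximation

variable {E : Type*} [NormedAddCommGroup E] [NormedSpace ℝ E]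

theorem exists_polynomialModule_near_of_continuousOn {h : ℝ → E}
    (hh : ContinuousOn h (Set.Icc 0 1)) {ε : ℝ} (hε : 0 < ε) :
    ∃ q : PolynomialModule ℝ E, ∀ x ∈ Set.Icc (0 : ℝ) 1,
      ‖h x - PolynomialModule.eval x q‖ < ε := by
  let H : C(unitInterval, E) := ⟨_, hh.domRestrict⟩
  obtain ⟨n, hn⟩ := (Metric.tendsto_nhds.1 (bernsteinApproximation_uniform H) ε hε).exists
  let q : PolynomialModule ℝ E := ∑ k : Fin (n + 1),
    bernsteinPolynomial ℝ n k • PolynomialModule.single ℝ 0 (H (bernstein.z k))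
  refine ⟨q, fun x hx ↦ ?_⟩
  have eval_q : PolynomialModule.eval x q = bernsteinApproximation n H ⟨x, hx⟩ := by
    simp [q, bernsteinApproximation.apply, bernstein]
  calc ‖h x - PolynomialModule.eval x q‖
      = dist (bernsteinApproximation n H ⟨x, hx⟩) (H ⟨x, hx⟩) := by
        rw [eval_q, dist_comm, dist_eq_norm]
        rfl
    _ ≤ dist (bernsteinApproximation n H) H := ContinuousMap.dist_apply_le_dist _
    _ < ε := hn

theorem continuous_inv_smul_comp_neg_log {g : ℝ → E} (hg : Continuous g)
    (hg_top : ∀ᶠ t in atTop, g t = 0) : Continuous fun x : ℝ ↦ x⁻¹ • g (-Real.log x) := by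
  refine continuous_iff_continuousAt.2 fun x ↦ ?_
  rcases eq_or_ne x 0 with rfl | hx
  · have neg_log_atTop : Tendsto (fun x ↦ -Real.log x) (𝓝[≠] 0) atTop :=
      tendsto_neg_atBot_atTop.comp Real.tendsto_log_nhdsNE_zero
    rw [continuousAt_iff_punctured_nhds, inv_zero, zero_smul]
    refine tendsto_const_nhds.congr' ?_
    filter_upwards [neg_log_atTop.eventually hg_top] with x hx
    rw [hx, smul_zero]
  · exact (continuousAt_inv₀ hx).smul (hg.continuousAt.comp (Real.continuousAt_log hx).neg)

/-- The exponential sum `∑ n, exp (-(n + 1) t) • qₙ` with coefficients `qₙ` in `E`, encoded by the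
polynomial `q = ∑ n, qₙ Xⁿ` as `x • q(x)` at `x = exp (-t)`. -/
noncomputable def expSum (q : PolynomialModule ℝ E) (t : ℝ) : E :=
  Real.exp (-t) • PolynomialModule.eval (Real.exp (-t)) q

theorem expSum_eq_sum (q : PolynomialModule ℝ E) (t : ℝ) :
    expSum q t = q.coeff.sum fun n v ↦ Real.exp (-(n + 1) * t) • v := by
  rw [expSum, PolynomialModule.eval_apply, Finsupp.smul_sum]
  refine Finsupp.sum_congr fun n _ ↦ ?_
  rw [smul_smul, ← Real.exp_nat_mul, ← Real.exp_add]
  ring_nf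

theorem exists_expSum_eq_sum_fin (q : PolynomialModule ℝ E) :
    ∃ (N : ℕ) (c : Fin N → E), ∀ t,
      expSum q t = ∑ i : Fin N, Real.exp (-((i : ℕ) + 1) * t) • c i := by
  refine ⟨q.coeff.support.sup id + 1, fun i ↦ q.coeff i, fun t ↦ ?_⟩
  rw [expSum_eq_sum,
    Finsupp.sum_of_support_subset _ (Finset.subset_range_sup_succ _) _ (fun _ _ ↦ smul_zero _),
    Finset.sum_range]

theorem continuous_expSum (q : PolynomialModule ℝ E) : Continuous (expSum q) := by
  simp only [funext (expSum_eq_sum q), Finsupp.sum]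
  fun_prop

theorem exists_norm_sub_expSum_le {g : ℝ → E} (hg : Continuous g)
    (hg_top : ∀ᶠ t in atTop, g t = 0) {δ : ℝ} (hδ : 0 < δ) :
    ∃ q : PolynomialModule ℝ E, ∀ t : ℝ, 0 ≤ t → ‖g t - expSum q t‖ ≤ δ * Real.exp (-t) := by
  obtain ⟨q, hq⟩ := exists_polynomialModule_near_of_continuousOn
    (continuous_inv_smul_comp_neg_log hg hg_top).continuousOn hδ
  refine ⟨q, fun t ht ↦ ?_⟩
  set x := Real.exp (-t)
  have hx : 0 < x := Real.exp_pos _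
  have near : ‖x⁻¹ • g t - PolynomialModule.eval x q‖ < δ := by
    simpa [x] using hq x ⟨hx.le, Real.exp_le_one_iff.2 (neg_nonpos.2 ht)⟩
  calc ‖g t - expSum q t‖
      = ‖x • (x⁻¹ • g t - PolynomialModule.eval x q)‖ := by
        rw [smul_sub, smul_inv_smul₀ hx.ne', expSum]
    _ = ‖x⁻¹ • g t - PolynomialModule.eval x q‖ * x := by
        rw [norm_smul, Real.norm_of_nonneg hx.le, mul_comm]
    _ ≤ δ * x := by gcongr

theorem exists_eLpNorm_sub_expSum_lt {μ : Measure ℝ} [IsLocallyFiniteMeasure μ]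
    (hμ : ∀ᵐ t ∂μ, 0 ≤ t) {p : ℝ≥0∞} (hp : p ≠ ∞)
    (hexp : MemLp (fun t ↦ Real.exp (-t)) p μ) {f : ℝ → E} (hf : MemLp f p μ)
    {ε : ℝ≥0∞} (hε : ε ≠ 0) :
    ∃ q : PolynomialModule ℝ E, eLpNorm (f - expSum q) p μ < ε := by
  obtain ⟨η, hη, add_lt⟩ := exists_Lp_half E μ p hε
  obtain ⟨g, hg_supp, hfg, hg, hg_mem⟩ := hf.exists_hasCompactSupport_eLpNorm_sub_le hp hη.ne'
  obtain ⟨δ, hδ, hδη⟩ := ENNReal.exists_nnreal_pos_mul_lt hexp.eLpNorm_ne_top hη.ne'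
  have hg_top : ∀ᶠ t in atTop, g t = 0 := by
    rw [hasCompactSupport_iff_eventuallyEq, coclosedCompact_eq_cocompact] at hg_supp
    exact atTop_le_cocompact hg_supp
  obtain ⟨q, hq⟩ := exists_norm_sub_expSum_le hg hg_top (NNReal.coe_pos.2 hδ)
  have hgq : eLpNorm (g - expSum q) p μ ≤ η := by
    refine (eLpNorm_le_nnreal_smul_eLpNorm_of_ae_le_mul (hμ.mono fun t ht ↦ ?_) p).trans hδη.le
    simpa [← NNReal.coe_le_coe] using hq t ht
  refine ⟨q, ?_⟩
  rw [← sub_add_sub_cancel f g]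
  exact add_lt _ _ (hf.sub hg_mem).aestronglyMeasurable
    (hg.sub (continuous_expSum q)).aestronglyMeasurable hfg hgq

theorem stmt4_general {f : ℝ → E} (hf : IntegrableOn f (Set.Ioi 0)) {ε : ℝ} (hε : 0 < ε) :
    ∃ (N : ℕ) (c : Fin N → E),
      (∫ t in Set.Ioi (0 : ℝ), ‖f t - ∑ i : Fin N, Real.exp (-((i : ℕ) + 1) * t) • c i‖) ≤ ε := by
  obtain ⟨q, hq⟩ := exists_eLpNorm_sub_expSum_lt
    ((ae_restrict_mem measurableSet_Ioi).mono fun _ ↦ le_of_lt) ENNReal.one_ne_top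
    (memLp_one_iff_integrable.2 (integrableOn_exp_neg_Ioi 0)) (memLp_one_iff_integrable.2 hf)
    (ENNReal.ofReal_pos.2 hε).ne'
  have sub_meas : AEStronglyMeasurable (f - expSum q) (volume.restrict (Set.Ioi 0)) :=
    hf.aestronglyMeasurable.sub (continuous_expSum q).aestronglyMeasurable
  obtain ⟨N, c, hc⟩ := exists_expSum_eq_sum_fin q
  refine ⟨N, c, ?_⟩
  calc ∫ t in Set.Ioi (0 : ℝ), ‖f t - ∑ i : Fin N, Real.exp (-((i : ℕ) + 1) * t) • c i‖
      = ∫ t in Set.Ioi (0 : ℝ), ‖(f - expSum q) t‖ := by simp only [Pi.sub_apply, hc]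
    _ = (eLpNorm (f - expSum q) 1 (volume.restrict (Set.Ioi 0))).toReal := by
        rw [toReal_eLpNorm sub_meas, lpNorm_one_eq_integral_norm sub_meas]
    _ ≤ ε := ENNReal.toReal_le_of_le_ofReal hε.le hq.le

end ExponentialApproximation

/-- Lumped-system kernels (finite linear combinations of `t^j exp(λ t)` with `Re λ < 0`)
are dense in `L¹(ℝ₊)`. -/
theorem stmt4 (f : ℝ → ℂ) (hf : Integrable f)
    (hf0 : ∀ t : ℝ, t < 0 → f t = 0) (ε : ℝ) (hε : 0 < ε) :
    ∃ (N : ℕ) (c lam : Fin N → ℂ) (j : Fin N → ℕ),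
      (∀ i, (lam i).re < 0) ∧
      (∫ t in Set.Ioi (0:ℝ),
        ‖f t - ∑ i, c i * (t : ℂ) ^ (j i) * Complex.exp (lam i * t)‖) ≤ ε := by
  obtain ⟨N, c, hc⟩ := stmt4_general hf.integrableOn hε
  refine ⟨N, c, fun i ↦ ((-((i : ℕ) + 1) : ℝ) : ℂ), 0, fun i ↦ ?_, ?_⟩
  · rw [ofReal_re]
    linarith [(i : ℕ).cast_nonneg (α := ℝ)]
  · simpa [mul_comm] using hc
end

section
/- Let 0 ≤ ϑ₁ < ϑ₂ < ∞ and let g ∈ K(I_{ϑ₁,ϑ₂}) be a distributed-delay kernel. Then for every ε > 0 there exist finitely many coefficients c_{ij} ∈ ℂ and exponents λ_i ∈ ℂ with Re λ_i < 0 such that ∫₀^∞ |g(t) − Σ_{i,j} c_{ij} t^j exp(λ_i t)| dt ≤ ε; i.e., every distributed delay can be approximated in L¹-norm (equivalently, in the graph topology) by a lumped-system kernel. -/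
open Complex MeasureTheory

/-!
The substitution `x = exp (-t)` turns a continuous `k` on `[0, ∞)` that is `o(exp (-t))` into the
function `x⁻¹ * k (-log x)`, which is continuous on `[0, 1]` with value `0` at `x = 0`. If a
polynomial `p` is uniformly `δ`-close to it, then `exp (-t) * p (exp (-t))` is within
`δ * exp (-t)` of `k t`, hence within `δ` of `k` in `L¹(0, ∞)`. Continuous functions with compact
support are dense in `L¹(0, ∞)`, so every integrable function is approximated by combinations of
the exponentials `exp (-(i + 1) t)`.
-/

open Filter Polynomial Set Topology

section Weierstrass

variable {𝕜 : Type*} [RCLike 𝕜]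

theorem norm_rclike_I_le_one : ‖(RCLike.I : 𝕜)‖ ≤ 1 := by
  rcases eq_or_ne (RCLike.I : 𝕜) 0 with hI | hI
  · rw [hI, norm_zero]
    exact zero_le_one
  · exact (RCLike.norm_I_of_ne_zero hI).le

theorem exists_rclike_polynomial_near_of_continuousOn (a b : ℝ) (f : ℝ → 𝕜)
    (hf : ContinuousOn f (Icc a b)) (ε : ℝ) (hε : 0 < ε) :
    ∃ p : 𝕜[X], ∀ x ∈ Icc a b, ‖p.eval (x : 𝕜) - f x‖ < ε := by
  obtain ⟨p, hp⟩ := exists_polynomial_near_of_continuousOn a b (fun x ↦ RCLike.re (f x))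
    (RCLike.continuous_re.comp_continuousOn hf) (ε / 2) (half_pos hε)
  obtain ⟨q, hq⟩ := exists_polynomial_near_of_continuousOn a b (fun x ↦ RCLike.im (f x))
    (RCLike.continuous_im.comp_continuousOn hf) (ε / 2) (half_pos hε)
  let toK : ℝ →+* 𝕜 := algebraMap ℝ 𝕜
  refine ⟨p.map toK + q.map toK * C RCLike.I, fun x hx ↦ ?_⟩
  have eval_map_toK (r : ℝ[X]) : (r.map toK).eval (x : 𝕜) = ((r.eval x : ℝ) : 𝕜) :=
    eval_map_apply toK x
  have split_error : (p.map toK + q.map toK * C RCLike.I).eval (x : 𝕜) - f x =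
      ((p.eval x - RCLike.re (f x) : ℝ) : 𝕜) +
        ((q.eval x - RCLike.im (f x) : ℝ) : 𝕜) * RCLike.I := by
    rw [eval_add, eval_mul, eval_C, eval_map_toK, eval_map_toK]
    nth_rw 1 [← RCLike.re_add_im (f x)]
    push_cast
    ring
  calc ‖(p.map toK + q.map toK * C RCLike.I).eval (x : 𝕜) - f x‖
      ≤ |p.eval x - RCLike.re (f x)| + |q.eval x - RCLike.im (f x)| * ‖(RCLike.I : 𝕜)‖ := by
        rw [split_error]
        exact (norm_add_le _ _).trans_eq (by rw [norm_mul, RCLike.norm_ofReal, RCLike.norm_ofReal])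
    _ ≤ |p.eval x - RCLike.re (f x)| + |q.eval x - RCLike.im (f x)| := by
        gcongr
        exact mul_le_of_le_one_right (abs_nonneg _) norm_rclike_I_le_one
    _ < ε := by linarith [hp x hx, hq x hx]

end Weierstrass

section ExponentialSubstitution

-- At `x = 0` the function takes the value `0⁻¹ • k 0 = 0`, which is also its limit there.
theorem continuous_inv_smul_comp_neg_log_s5 {E : Type*} [NormedAddCommGroup E] [NormedSpace ℝ E]
    {k : ℝ → E} (hk : Continuous k) (hlim : Tendsto (fun t ↦ Real.exp t • k t) atTop (𝓝 0)) :
    Continuous fun x : ℝ ↦ x⁻¹ • k (-Real.log x) := by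
  refine continuous_iff_continuousAt.2 fun x ↦ ?_
  rcases eq_or_ne x 0 with rfl | hx
  · rw [← continuousWithinAt_compl_self, ContinuousWithinAt, inv_zero, zero_smul]
    have comp_log : Tendsto (fun x ↦ Real.exp (-Real.log x) • k (-Real.log x)) (𝓝[≠] 0) (𝓝 0) :=
      hlim.comp (tendsto_neg_atBot_atTop.comp Real.tendsto_log_nhdsNE_zero)
    refine squeeze_zero_norm' ?_ (tendsto_zero_iff_norm_tendsto_zero.1 comp_log)
    filter_upwards [self_mem_nhdsWithin] with x (hx : x ≠ 0)
    rw [Real.exp_neg, Real.exp_log_eq_abs hx, norm_smul, norm_smul, norm_inv, norm_inv,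
      Real.norm_eq_abs, Real.norm_eq_abs, abs_abs]
  · exact (continuousAt_inv₀ hx).smul
      (hk.continuousAt.comp (Real.continuousAt_log hx).neg)

variable {𝕜 : Type*} [RCLike 𝕜]

theorem exists_polynomial_norm_sub_exp_neg_mul_eval_le {k : ℝ → 𝕜} (hk : Continuous k)
    (hlim : Tendsto (fun t ↦ Real.exp t • k t) atTop (𝓝 0)) {δ : ℝ} (hδ : 0 < δ) :
    ∃ p : 𝕜[X], ∀ t : ℝ, 0 ≤ t →
      ‖k t - (Real.exp (-t) : 𝕜) * p.eval (Real.exp (-t) : 𝕜)‖ ≤ δ * Real.exp (-t) := by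
  obtain ⟨p, hp⟩ := exists_rclike_polynomial_near_of_continuousOn 0 1 _
    (continuous_inv_smul_comp_neg_log_s5 hk hlim).continuousOn δ hδ
  refine ⟨p, fun t ht ↦ ?_⟩
  have near : ‖p.eval (Real.exp (-t) : 𝕜) - Real.exp t • k t‖ < δ := by
    simpa only [Real.log_exp, neg_neg, ← Real.exp_neg] using
      hp (Real.exp (-t)) ⟨Real.exp_nonneg _, Real.exp_le_one_iff.2 (neg_nonpos.2 ht)⟩
  have factor : k t - (Real.exp (-t) : 𝕜) * p.eval (Real.exp (-t) : 𝕜) =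
      Real.exp (-t) • (Real.exp t • k t - p.eval (Real.exp (-t) : 𝕜)) := by
    rw [smul_sub, smul_smul, ← Real.exp_add, neg_add_cancel, Real.exp_zero, one_smul,
      RCLike.real_smul_eq_coe_mul]
  rw [factor, norm_smul, Real.norm_of_nonneg (Real.exp_nonneg _), mul_comm, norm_sub_rev]
  exact mul_le_mul_of_nonneg_right near.le (Real.exp_nonneg _)

theorem tendsto_exp_smul_atTop_of_hasCompactSupport {E : Type*} [NormedAddCommGroup E]
    [NormedSpace ℝ E] {k : ℝ → E} (hk : HasCompactSupport k) :
    Tendsto (fun t ↦ Real.exp t • k t) atTop (𝓝 0) := by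
  have eventually_zero : k =ᶠ[atTop] 0 :=
    (coclosedCompact_eq_cocompact (X := ℝ) ▸ hasCompactSupport_iff_eventuallyEq.1 hk).filter_mono
      atTop_le_cocompact
  refine tendsto_const_nhds.congr' ?_
  filter_upwards [eventually_zero] with t ht
  rw [ht, Pi.zero_apply, smul_zero]

theorem exists_polynomial_setIntegral_norm_sub_exp_neg_mul_eval_le {g : ℝ → 𝕜}
    (hg : IntegrableOn g (Ioi 0)) {ε : ℝ} (hε : 0 < ε) :
    ∃ p : 𝕜[X],
      ∫ t in Ioi (0 : ℝ), ‖g t - (Real.exp (-t) : 𝕜) * p.eval (Real.exp (-t) : 𝕜)‖ ≤ ε := by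
  obtain ⟨k, hk_supp, hgk, hk_cont, hk_int⟩ :=
    hg.exists_hasCompactSupport_integral_sub_le (half_pos hε)
  obtain ⟨p, hp⟩ := exists_polynomial_norm_sub_exp_neg_mul_eval_le hk_cont
    (tendsto_exp_smul_atTop_of_hasCompactSupport hk_supp) (half_pos hε)
  have hgk_int : IntegrableOn (fun t ↦ ‖g t - k t‖) (Ioi 0) := (hg.sub hk_int).norm
  have hexp_int : IntegrableOn (fun t ↦ ε / 2 * Real.exp (-t)) (Ioi 0) :=
    (integrableOn_exp_neg_Ioi 0).const_mul _
  refine ⟨p, ?_⟩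
  calc ∫ t in Ioi (0 : ℝ), ‖g t - (Real.exp (-t) : 𝕜) * p.eval (Real.exp (-t) : 𝕜)‖
      ≤ ∫ t in Ioi (0 : ℝ), (‖g t - k t‖ + ε / 2 * Real.exp (-t)) := by
        refine integral_mono_of_nonneg (.of_forall fun _ ↦ norm_nonneg _)
          (hgk_int.add hexp_int) (ae_restrict_of_forall_mem measurableSet_Ioi fun t ht ↦ ?_)
        exact (norm_sub_le_norm_sub_add_norm_sub _ (k t) _).trans
          (add_le_add_right (hp t (le_of_lt ht)) _)
    _ = (∫ t in Ioi (0 : ℝ), ‖g t - k t‖) + ε / 2 := by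
        rw [integral_add hgk_int hexp_int, integral_const_mul, integral_exp_neg_Ioi_zero, mul_one]
    _ ≤ ε := by linarith

end ExponentialSubstitution

theorem exp_neg_mul_eval_exp_neg (p : ℂ[X]) (z : ℂ) :
    exp (-z) * p.eval (exp (-z)) =
      ∑ i : Fin (p.natDegree + 1), p.coeff i * exp (-((i : ℂ) + 1) * z) := by
  rw [eval_eq_sum_range, ← Fin.sum_univ_eq_sum_range (fun i ↦ p.coeff i * exp (-z) ^ i),
    Finset.mul_sum]
  refine Finset.sum_congr rfl fun i _ ↦ ?_
  rw [mul_left_comm, ← Complex.exp_nat_mul, ← Complex.exp_add]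
  ring_nf

theorem integrable_of_continuousOn_Icc_of_support_subset {E : Type*} [NormedAddCommGroup E]
    {μ : Measure ℝ} [IsLocallyFiniteMeasure μ] {f : ℝ → E} {a b : ℝ}
    (hf : ContinuousOn f (Icc a b)) (hsupp : f.support ⊆ Icc a b) : Integrable f μ :=
  (integrableOn_iff_integrable_of_support_subset hsupp).1 hf.integrableOn_Icc

theorem stmt5_general (g : ℝ → ℂ) (hg : IntegrableOn g (Ioi 0)) (ε : ℝ) (hε : 0 < ε) :
    ∃ (M : ℕ) (c' lam' : Fin M → ℂ) (j' : Fin M → ℕ),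
      (∀ i, (lam' i).re < 0) ∧
      (∫ t in Ioi (0 : ℝ),
        ‖g t - ∑ i, c' i * (t : ℂ) ^ (j' i) * Complex.exp (lam' i * t)‖) ≤ ε := by
  obtain ⟨p, hp⟩ := exists_polynomial_setIntegral_norm_sub_exp_neg_mul_eval_le hg hε
  refine ⟨p.natDegree + 1, fun i ↦ p.coeff i, fun i ↦ -((i : ℂ) + 1), fun _ ↦ 0, fun i ↦ ?_, ?_⟩
  · rw [neg_re, add_re, natCast_re, one_re]
    exact neg_neg_of_pos (by positivity)
  · simpa only [pow_zero, mul_one, ← exp_neg_mul_eval_exp_neg, coe_algebraMap, ofReal_exp,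
      ofReal_neg] using hp

/-- Every distributed-delay kernel `g ∈ K(I_{ϑ₁,ϑ₂})` can be approximated in `L¹`-norm
(equivalently, in the graph topology) by a lumped-system kernel, i.e. by a finite linear
combination of `t^j exp(λ t)` with `Re λ < 0`. -/
theorem stmt5 (ϑ₁ ϑ₂ : ℝ) (hϑ₁ : 0 ≤ ϑ₁) (hϑ : ϑ₁ < ϑ₂)
    (g : ℝ → ℂ) (N : ℕ) (c lam : Fin N → ℂ) (j : Fin N → ℕ)
    (hg_supp : ∀ t : ℝ, t ∉ Set.Icc ϑ₁ ϑ₂ → g t = 0)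
    (hg : ∀ t ∈ Set.Icc ϑ₁ ϑ₂,
      g t = ∑ i, c i * (t : ℂ) ^ (j i) * Complex.exp (lam i * t))
    (ε : ℝ) (hε : 0 < ε) :
    ∃ (M : ℕ) (c' lam' : Fin M → ℂ) (j' : Fin M → ℕ),
      (∀ i, (lam' i).re < 0) ∧
      (∫ t in Set.Ioi (0:ℝ),
        ‖g t - ∑ i, c' i * (t : ℂ) ^ (j' i) * Complex.exp (lam' i * t)‖) ≤ ε := by
  have hg_cont : ContinuousOn g (Icc ϑ₁ ϑ₂) := (Continuous.continuousOn (by fun_prop)).congr hg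
  exact stmt5_general g (integrable_of_continuousOn_Icc_of_support_subset hg_cont
    (Function.support_subset_iff'.2 hg_supp)).integrableOn ε hε
end

section
/- Let λ ∈ ℂ with Re λ ≥ 0 and ϑ > 0. For every ε > 0 there exist n ∈ ℕ, coefficients γ₁, …, γ_n ∈ ℂ and exponents α₁, …, α_n ∈ ℂ with Re α_i < 0 such that ∫₀^ϑ |exp(λ t) − Σ_{i=1}^n γ_i exp(α_i t)| dt ≤ ε. Equivalently, the elementary distributed-delay kernel θ_λ with unstable exponent can be approximated in L¹-norm (i.e., in the graph topology) by distributed-delay kernels whose exponents all have negative real part. -/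
open Complex intervalIntegral

/-! The substitution `x = exp (-t)` maps `[a, b]` onto a compact interval that avoids `0`, so
`f (-log x) / x` is continuous there and, by Weierstrass, uniformly close to a polynomial `P x`.
Hence `f t` is uniformly close to `exp (-t) * P (exp (-t))`, a combination of the functions
`exp (-(i + 1) * t)`; the extra factor `exp (-t)` is what excludes the exponent `0`. -/

open Set Polynomial

theorem exists_polynomial_near_of_continuousOn_rclike {𝕜 : Type*} [RCLike 𝕜] {a b : ℝ}
    {f : ℝ → 𝕜} (hf : ContinuousOn f (Icc a b)) {ε : ℝ} (hε : 0 < ε) :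
    ∃ P : 𝕜[X], ∀ x ∈ Icc a b, ‖f x - P.eval (x : 𝕜)‖ < ε := by
  obtain ⟨p, hp⟩ := exists_polynomial_near_of_continuousOn a b (fun x ↦ RCLike.re (f x))
    (RCLike.continuous_re.comp_continuousOn hf) (ε / 2) (half_pos hε)
  obtain ⟨q, hq⟩ := exists_polynomial_near_of_continuousOn a b (fun x ↦ RCLike.im (f x))
    (RCLike.continuous_im.comp_continuousOn hf) (ε / 2) (half_pos hε)
  refine ⟨p.map (algebraMap ℝ 𝕜) + C RCLike.I * q.map (algebraMap ℝ 𝕜), fun x hx ↦ ?_⟩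
  have eval_map_ofReal (r : ℝ[X]) :
      (r.map (algebraMap ℝ 𝕜)).eval (x : 𝕜) = ((r.eval x : ℝ) : 𝕜) :=
    eval_map_apply (f := algebraMap ℝ 𝕜) x
  have norm_I_le_one : ‖(RCLike.I : 𝕜)‖ ≤ 1 := by
    rw [RCLike.norm_I]
    split_ifs <;> norm_num
  calc
    _ = ‖((RCLike.re (f x) - p.eval x : ℝ) : 𝕜) +
          RCLike.I * ((RCLike.im (f x) - q.eval x : ℝ) : 𝕜)‖ := by
      rw [eval_add, eval_mul, eval_C, eval_map_ofReal, eval_map_ofReal]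
      nth_rewrite 1 [← RCLike.re_add_im (f x)]
      push_cast
      ring_nf
    _ ≤ |RCLike.re (f x) - p.eval x| + ‖(RCLike.I : 𝕜)‖ * |RCLike.im (f x) - q.eval x| := by
      simpa only [norm_mul, RCLike.norm_ofReal] using norm_add_le
        ((RCLike.re (f x) - p.eval x : ℝ) : 𝕜) (RCLike.I * ((RCLike.im (f x) - q.eval x : ℝ) : 𝕜))
    _ ≤ |RCLike.re (f x) - p.eval x| + |RCLike.im (f x) - q.eval x| := by
      gcongr
      exact mul_le_of_le_one_left (abs_nonneg _) norm_I_le_one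
    _ < ε / 2 + ε / 2 := by
      rw [abs_sub_comm, abs_sub_comm (RCLike.im (f x))]
      exact add_lt_add (hp x hx) (hq x hx)
    _ = ε := add_halves ε

theorem exists_polynomial_exp_neg_near {a b : ℝ} {f : ℝ → ℂ} (hf : ContinuousOn f (Icc a b))
    {ε : ℝ} (hε : 0 < ε) :
    ∃ P : ℂ[X], ∀ t ∈ Icc a b, ‖f t - exp (-t) * P.eval (exp (-t))‖ < ε := by
  have ne_zero {x : ℝ} (hx : x ∈ Icc (Real.exp (-b)) (Real.exp (-a))) : x ≠ 0 :=
    ((Real.exp_pos _).trans_le hx.1).ne'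
  have neg_log_mem : MapsTo (fun x ↦ -Real.log x) (Icc (Real.exp (-b)) (Real.exp (-a)))
      (Icc a b) := fun x hx ↦ by
    have x_pos : 0 < x := (Real.exp_pos _).trans_le hx.1
    exact ⟨le_neg.2 ((Real.log_le_iff_le_exp x_pos).2 hx.2),
      neg_le.2 ((Real.le_log_iff_exp_le x_pos).2 hx.1)⟩
  have hg : ContinuousOn (fun x : ℝ ↦ f (-Real.log x) / x)
      (Icc (Real.exp (-b)) (Real.exp (-a))) :=
    (hf.comp (continuousOn_id.log fun _ ↦ ne_zero).neg neg_log_mem).div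
      continuous_ofReal.continuousOn fun _ hx ↦ ofReal_ne_zero.2 (ne_zero hx)
  obtain ⟨P, hP⟩ :=
    exists_polynomial_near_of_continuousOn_rclike hg (mul_pos hε (Real.exp_pos a))
  refine ⟨P, fun t ht ↦ ?_⟩
  have near := hP (Real.exp (-t))
    ⟨Real.exp_le_exp.2 (neg_le_neg ht.2), Real.exp_le_exp.2 (neg_le_neg ht.1)⟩
  simp only [Real.log_exp, neg_neg, coe_algebraMap, ofReal_exp, ofReal_neg] at near
  calc
    ‖f t - exp (-t) * P.eval (exp (-t))‖ =
        Real.exp (-t) * ‖f t / exp (-t) - P.eval (exp (-t))‖ := by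
      rw [← norm_exp_ofReal (-t), ofReal_neg, ← norm_mul, mul_sub,
        mul_div_cancel₀ _ (exp_ne_zero _)]
    _ < Real.exp (-t) * (ε * Real.exp a) := by gcongr
    _ = ε * Real.exp (a - t) := by rw [mul_left_comm, ← Real.exp_add, neg_add_eq_sub]
    _ ≤ ε := mul_le_of_le_one_right hε.le (Real.exp_le_one_iff.2 (sub_nonpos.2 ht.1))

theorem exp_mul_eval_exp_eq_sum (P : ℂ[X]) (z : ℂ) :
    exp z * P.eval (exp z) =
      ∑ i : Fin (P.natDegree + 1), P.coeff i * exp (((i : ℕ) + 1) * z) := by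
  rw [eval_eq_sum_range, Finset.mul_sum,
    Fin.sum_univ_eq_sum_range (fun i : ℕ ↦ P.coeff i * exp ((i + 1) * z))]
  refine Finset.sum_congr rfl fun i _ ↦ ?_
  rw [add_one_mul, exp_add, exp_nat_mul]
  ring

theorem exists_sum_exp_near_of_continuousOn {a b : ℝ} {f : ℝ → ℂ}
    (hf : ContinuousOn f (Icc a b)) {ε : ℝ} (hε : 0 < ε) :
    ∃ (n : ℕ) (γ α : Fin n → ℂ), (∀ i, (α i).re < 0) ∧
      ∀ t ∈ Icc a b, ‖f t - ∑ i, γ i * exp (α i * t)‖ < ε := by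
  obtain ⟨P, hP⟩ := exists_polynomial_exp_neg_near hf hε
  refine ⟨P.natDegree + 1, fun i ↦ P.coeff i, fun i ↦ -((i : ℕ) + 1), fun i ↦ ?_, fun t ht ↦ ?_⟩
  · rw [neg_re, add_re, natCast_re, one_re]
    exact neg_neg_of_pos (Nat.cast_add_one_pos _)
  · simpa only [exp_mul_eval_exp_eq_sum, neg_mul_comm] using hP t ht

theorem stmt7_general {a b : ℝ} (hab : a < b) {f : ℝ → ℂ} (hf : ContinuousOn f (Icc a b))
    {ε : ℝ} (hε : 0 < ε) :
    ∃ (n : ℕ) (γ α : Fin n → ℂ), (∀ i, (α i).re < 0) ∧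
      (∫ t in a..b, ‖f t - ∑ i, γ i * exp (α i * t)‖) ≤ ε := by
  have length_pos : 0 < b - a := sub_pos.2 hab
  obtain ⟨n, γ, α, hα, near⟩ := exists_sum_exp_near_of_continuousOn hf (div_pos hε length_pos)
  refine ⟨n, γ, α, hα, ?_⟩
  calc
    _ ≤ ‖∫ t in a..b, ‖f t - ∑ i, γ i * exp (α i * t)‖‖ := Real.le_norm_self _
    _ ≤ ε / (b - a) * |b - a| := norm_integral_le_of_norm_le_const fun t ht ↦ by
      rw [uIoc_of_le hab.le] at ht
      rw [norm_norm]
      exact (near t (Ioc_subset_Icc_self ht)).le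
    _ = ε := by rw [abs_of_pos length_pos, div_mul_cancel₀ _ length_pos.ne']

/-- The elementary distributed-delay kernel `θ_λ` with unstable exponent (`Re λ ≥ 0`)
can be approximated in `L¹`-norm (graph topology) by distributed-delay kernels whose
exponents all have negative real part. -/
theorem stmt7 (lam : ℂ) (hlam : 0 ≤ lam.re) (ϑ : ℝ) (hϑ : 0 < ϑ)
    (ε : ℝ) (hε : 0 < ε) :
    ∃ (n : ℕ) (γ α : Fin n → ℂ),
      (∀ i, (α i).re < 0) ∧
      (∫ t in (0:ℝ)..ϑ,
        ‖Complex.exp (lam * t) - ∑ i, γ i * Complex.exp (α i * t)‖) ≤ ε := by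
  exact stmt7_general hϑ (f := fun t ↦ exp (lam * t)) (by fun_prop) hε
end

section
/- Let 0 ≤ ϑ₁ < ϑ₂ < ∞. For every f ∈ K(I_{ϑ₁,ϑ₂}) and every ε > 0 there exists f_app ∈ K_s(I_{ϑ₁,ϑ₂}) such that ∫_ℝ |f(t) − f_app(t)| dt ≤ ε. That is, K_s(I_{ϑ₁,ϑ₂}) is dense in K(I_{ϑ₁,ϑ₂}) for the L¹-norm (equivalently, for the graph topology). -/
open Complex MeasureTheory

/-!
Fix any exponent `μ`. On a compact interval `exp (μ t)` is continuous and does not vanish, so by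
Weierstrass the products `P(t) exp (μ t)` with `P` a polynomial are uniformly dense in the
continuous functions, hence `L¹`-dense in all integrable ones. Taking `μ = -1` gives kernels with
a single stable exponent.
-/

open Polynomial Set

section WeightedWeierstrass

variable {𝕜 : Type*} [RCLike 𝕜] {a b ε : ℝ} {f w : ℝ → 𝕜}

lemma exists_polynomial_norm_sub_eval_ofReal_lt (hf : ContinuousOn f (Icc a b)) (hε : 0 < ε) :
    ∃ P : 𝕜[X], ∀ t ∈ Icc a b, ‖f t - P.eval (t : 𝕜)‖ < ε := by
  obtain ⟨p, hp⟩ := exists_polynomial_near_of_continuousOn a b (fun t ↦ RCLike.re (f t))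
    (RCLike.continuous_re.comp_continuousOn hf) (ε / 2) (half_pos hε)
  obtain ⟨q, hq⟩ := exists_polynomial_near_of_continuousOn a b (fun t ↦ RCLike.im (f t))
    (RCLike.continuous_im.comp_continuousOn hf) (ε / 2) (half_pos hε)
  let P : 𝕜[X] := p.map (algebraMap ℝ 𝕜) + q.map (algebraMap ℝ 𝕜) * C RCLike.I
  have eval_P (t : ℝ) : P.eval (t : 𝕜) = (p.eval t : ℝ) + (q.eval t : ℝ) * RCLike.I := by
    have eval_map (r : ℝ[X]) : (r.map (algebraMap ℝ 𝕜)).eval (t : 𝕜) = (r.eval t : ℝ) :=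
      eval_map_apply (algebraMap ℝ 𝕜) t
    simp only [P, eval_add, eval_mul, eval_C, eval_map]
  have norm_I_le_one : ‖(RCLike.I : 𝕜)‖ ≤ 1 := by
    rw [RCLike.norm_I]
    split_ifs <;> norm_num
  refine ⟨P, fun t ht ↦ ?_⟩
  calc ‖f t - P.eval (t : 𝕜)‖
      = ‖((RCLike.re (f t) - p.eval t : ℝ) : 𝕜)
          + ((RCLike.im (f t) - q.eval t : ℝ) : 𝕜) * RCLike.I‖ := by
        rw [eval_P]
        nth_rw 1 [← RCLike.re_add_im (f t)]
        push_cast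
        ring_nf
    _ ≤ |RCLike.re (f t) - p.eval t| + |RCLike.im (f t) - q.eval t| * 1 := by
        refine (norm_add_le _ _).trans ?_
        rw [norm_mul, RCLike.norm_ofReal, RCLike.norm_ofReal]
        gcongr
    _ < ε := by
        rw [abs_sub_comm, abs_sub_comm (RCLike.im (f t))]
        linarith [hp t ht, hq t ht]

lemma exists_polynomial_norm_sub_eval_mul_lt (hf : ContinuousOn f (Icc a b))
    (hw : ContinuousOn w (Icc a b)) (hw₀ : ∀ t ∈ Icc a b, w t ≠ 0) (hε : 0 < ε) :
    ∃ P : 𝕜[X], ∀ t ∈ Icc a b, ‖f t - P.eval (t : 𝕜) * w t‖ < ε := by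
  obtain ⟨C, hC⟩ := isCompact_Icc.exists_bound_of_continuousOn hw
  have hC₀ : 0 < max C 1 := by positivity
  obtain ⟨P, hP⟩ := exists_polynomial_norm_sub_eval_ofReal_lt (hf.div hw hw₀) (div_pos hε hC₀)
  refine ⟨P, fun t ht ↦ ?_⟩
  calc ‖f t - P.eval (t : 𝕜) * w t‖ = ‖f t / w t - P.eval (t : 𝕜)‖ * ‖w t‖ := by
        rw [← norm_mul, sub_mul, div_mul_cancel₀ _ (hw₀ t ht)]
    _ < ε / max C 1 * ‖w t‖ := by
        have := norm_pos_iff.2 (hw₀ t ht)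
        gcongr
        exact hP t ht
    _ ≤ ε / max C 1 * max C 1 := by
        gcongr
        exact (hC t ht).trans (le_max_left _ _)
    _ = ε := div_mul_cancel₀ ε hC₀.ne'

variable {ν : Measure ℝ} [IsLocallyFiniteMeasure ν]

lemma exists_polynomial_setIntegral_norm_sub_eval_mul_le_of_continuousOn
    (hf : ContinuousOn f (Icc a b)) (hw : ContinuousOn w (Icc a b))
    (hw₀ : ∀ t ∈ Icc a b, w t ≠ 0) (hε : 0 < ε) :
    ∃ P : 𝕜[X], ∫ t in Icc a b, ‖f t - P.eval (t : 𝕜) * w t‖ ∂ν ≤ ε := by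
  have hmass : 0 < ν.real (Icc a b) + 1 := by positivity
  obtain ⟨P, hP⟩ := exists_polynomial_norm_sub_eval_mul_lt hf hw hw₀ (div_pos hε hmass)
  refine ⟨P, ?_⟩
  calc ∫ t in Icc a b, ‖f t - P.eval (t : 𝕜) * w t‖ ∂ν
      ≤ ε / (ν.real (Icc a b) + 1) * ν.real (Icc a b) :=
        (Real.le_norm_self _).trans <| norm_setIntegral_le_of_norm_le_const measure_Icc_lt_top
          fun t ht ↦ (norm_norm _).trans_le (hP t ht).le
    _ ≤ ε / (ν.real (Icc a b) + 1) * (ν.real (Icc a b) + 1) := by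
        gcongr
        exact le_add_of_nonneg_right zero_le_one
    _ = ε := div_mul_cancel₀ ε hmass.ne'

lemma exists_polynomial_setIntegral_norm_sub_eval_mul_le
    (hf : IntegrableOn f (Icc a b) ν) (hw : ContinuousOn w (Icc a b))
    (hw₀ : ∀ t ∈ Icc a b, w t ≠ 0) (hε : 0 < ε) :
    ∃ P : 𝕜[X], ∫ t in Icc a b, ‖f t - P.eval (t : 𝕜) * w t‖ ∂ν ≤ ε := by
  obtain ⟨g, -, hfg, hg, hg_int⟩ :=
    Integrable.exists_hasCompactSupport_integral_sub_le hf (half_pos hε)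
  obtain ⟨P, hP⟩ := exists_polynomial_setIntegral_norm_sub_eval_mul_le_of_continuousOn
    (ν := ν) hg.continuousOn hw hw₀ (half_pos hε)
  have hPw : IntegrableOn (fun t : ℝ ↦ P.eval (t : 𝕜) * w t) (Icc a b) ν :=
    ((P.continuous.comp RCLike.continuous_ofReal).continuousOn.mul hw).integrableOn_Icc
  refine ⟨P, ?_⟩
  calc ∫ t in Icc a b, ‖f t - P.eval (t : 𝕜) * w t‖ ∂ν
      ≤ ∫ t in Icc a b, (‖f t - g t‖ + ‖g t - P.eval (t : 𝕜) * w t‖) ∂ν :=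
        integral_mono (hf.sub hPw).norm ((hf.sub hg_int).norm.add (hg_int.sub hPw).norm)
          fun t ↦ norm_sub_le_norm_sub_add_norm_sub _ _ _
    _ = (∫ t in Icc a b, ‖f t - g t‖ ∂ν)
          + ∫ t in Icc a b, ‖g t - P.eval (t : 𝕜) * w t‖ ∂ν :=
        integral_add (hf.sub hg_int).norm (hg_int.sub hPw).norm
    _ ≤ ε / 2 + ε / 2 := add_le_add hfg hP
    _ = ε := add_halves ε

end WeightedWeierstrass

theorem stmt10_general (ϑ₁ ϑ₂ : ℝ) (μ : ℂ) (f : ℝ → ℂ)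
    (hf_supp : ∀ t : ℝ, t ∉ Icc ϑ₁ ϑ₂ → f t = 0) (hf : IntegrableOn f (Icc ϑ₁ ϑ₂))
    (ε : ℝ) (hε : 0 < ε) :
    ∃ (fapp : ℝ → ℂ) (M : ℕ) (c' : Fin M → ℂ),
      (∀ t : ℝ, t ∉ Icc ϑ₁ ϑ₂ → fapp t = 0) ∧
      (∀ t ∈ Icc ϑ₁ ϑ₂, fapp t = ∑ i, c' i * (t : ℂ) ^ (i : ℕ) * exp (μ * t)) ∧
      (∫ t : ℝ, ‖f t - fapp t‖) ≤ ε := by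
  obtain ⟨P, hP⟩ := exists_polynomial_setIntegral_norm_sub_eval_mul_le
    (w := fun t : ℝ ↦ exp (μ * t)) hf (by fun_prop) (fun t _ ↦ exp_ne_zero _) hε
  let fapp : ℝ → ℂ := (Icc ϑ₁ ϑ₂).indicator fun t ↦ P.eval (t : ℂ) * exp (μ * t)
  have fapp_supp (t : ℝ) (ht : t ∉ Icc ϑ₁ ϑ₂) : fapp t = 0 := indicator_of_notMem ht _
  have fapp_eq (t : ℝ) (ht : t ∈ Icc ϑ₁ ϑ₂) : fapp t = P.eval (t : ℂ) * exp (μ * t) :=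
    indicator_of_mem ht _
  refine ⟨fapp, P.natDegree + 1, fun i ↦ P.coeff i, fapp_supp, fun t ht ↦ ?_, ?_⟩
  · rw [fapp_eq t ht, eval_eq_sum_range, Finset.sum_range, Finset.sum_mul]
  · calc ∫ t : ℝ, ‖f t - fapp t‖ = ∫ t in Icc ϑ₁ ϑ₂, ‖f t - fapp t‖ :=
          (setIntegral_eq_integral_of_forall_compl_eq_zero fun t ht ↦ by
            rw [hf_supp t ht, fapp_supp t ht, sub_zero, norm_zero]).symm
      _ = ∫ t in Icc ϑ₁ ϑ₂, ‖f t - P.eval (t : ℂ) * exp (μ * t)‖ :=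
          setIntegral_congr_fun measurableSet_Icc fun t ht ↦ by simp only [fapp_eq t ht]
      _ ≤ ε := hP

/-- `K_s(I_{ϑ₁,ϑ₂})` is dense in `K(I_{ϑ₁,ϑ₂})` for the `L¹`-norm (graph topology):
every distributed-delay kernel can be `L¹`-approximated by one whose exponents all have
negative real part. -/
theorem stmt10 (ϑ₁ ϑ₂ : ℝ) (hϑ₁ : 0 ≤ ϑ₁) (hϑ : ϑ₁ < ϑ₂)
    (f : ℝ → ℂ) (N : ℕ) (c lam : Fin N → ℂ) (j : Fin N → ℕ)
    (hf_supp : ∀ t : ℝ, t ∉ Set.Icc ϑ₁ ϑ₂ → f t = 0)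
    (hf : ∀ t ∈ Set.Icc ϑ₁ ϑ₂,
      f t = ∑ i, c i * (t : ℂ) ^ (j i) * Complex.exp (lam i * t))
    (ε : ℝ) (hε : 0 < ε) :
    ∃ (fapp : ℝ → ℂ) (M : ℕ) (c' lam' : Fin M → ℂ) (j' : Fin M → ℕ),
      (∀ i, (lam' i).re < 0) ∧
      (∀ t : ℝ, t ∉ Set.Icc ϑ₁ ϑ₂ → fapp t = 0) ∧
      (∀ t ∈ Set.Icc ϑ₁ ϑ₂,
        fapp t = ∑ i, c' i * (t : ℂ) ^ (j' i) * Complex.exp (lam' i * t)) ∧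
      (∫ t : ℝ, ‖f t - fapp t‖) ≤ ε := by
  have hf_cont : ContinuousOn f (Icc ϑ₁ ϑ₂) := ContinuousOn.congr (by fun_prop) hf
  obtain ⟨fapp, M, c', hfapp⟩ :=
    stmt10_general ϑ₁ ϑ₂ (-1) f hf_supp hf_cont.integrableOn_Icc ε hε
  exact ⟨fapp, M, c', fun _ ↦ -1, (↑), fun _ ↦ by simp, hfapp⟩
end

section
/- Let α > 0 and ϑ > 0. Define ψ₀ : [0, 1] → ℝ by ψ₀(ϱ) = 1 if ϱ ≥ exp(−αϑ) and ψ₀(ϱ) = 0 if ϱ < exp(−αϑ), and for each n ∈ ℕ define θ_{0,n} : ℝ → ℝ by θ_{0,n}(t) = Σ_{k=0}^{n} C(n,k) ψ₀(k/n) exp(−αkt)(1 − exp(−αt))^{n−k} for t ∈ [0, ϑ] and θ_{0,n}(t) = 0 otherwise, where C(n,k) is the binomial coefficient. Then ∫₀^ϑ |1 − θ_{0,n}(t)| dt → 0 as n → ∞; i.e., θ_{0,n} converges in L¹(ℝ) to the kernel θ₀ (the indicator function of [0, ϑ]). -/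
open MeasureTheory intervalIntegral Filter

/-!
Bernstein polynomials of a bounded, possibly discontinuous, function `f` converge to `f` at every
point of continuity: near `x` the increment of `f` is small by continuity, away from `x` it is
dominated by a multiple of `(x - y) ^ 2`, and the binomial variance `x * (1 - x) / n` vanishes in
the limit. The step function `ψ₀` is continuous off `exp (-α * ϑ)`, and `exp (-α * t)` takes this
value only at `t = ϑ`, so the convergence holds almost everywhere and dominated convergence applies.
-/

section QuadraticModulus

variable {X E : Type*} [PseudoMetricSpace X] [SeminormedAddCommGroup E] {f : X → E} {x : X} {M : ℝ}

theorem exists_norm_sub_le_add_mul_dist_sq_of_continuousAt (hf : ContinuousAt f x)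
    (hM : ∀ y, ‖f y‖ ≤ M) {ε : ℝ} (hε : 0 < ε) :
    ∃ C, ∀ y, ‖f x - f y‖ ≤ ε + C * dist x y ^ 2 := by
  obtain ⟨δ, hδ, near⟩ := Metric.continuousAt_iff.mp hf ε hε
  have hM₀ : 0 ≤ M := (norm_nonneg _).trans (hM x)
  refine ⟨2 * M / δ ^ 2, fun y => ?_⟩
  rcases lt_or_ge (dist x y) δ with hy | hy
  · have : ‖f x - f y‖ < ε := by
      rw [← dist_eq_norm, dist_comm]
      exact near (by rwa [dist_comm])
    have : 0 ≤ 2 * M / δ ^ 2 * dist x y ^ 2 := by positivity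
    linarith
  · calc ‖f x - f y‖ ≤ 2 * M := by linarith [norm_sub_le (f x) (f y), hM x, hM y]
      _ = 2 * M / δ ^ 2 * δ ^ 2 := by field_simp
      _ ≤ 2 * M / δ ^ 2 * dist x y ^ 2 := by gcongr
      _ ≤ ε + 2 * M / δ ^ 2 * dist x y ^ 2 := by linarith

end QuadraticModulus

section BernsteinOperator

open scoped unitInterval

variable {E : Type*} [SeminormedAddCommGroup E] [NormedSpace ℝ E]

/-- The `n`-th Bernstein polynomial of an arbitrary function on `[0, 1]`. Unlike
`bernsteinApproximation` it does not require continuity, so it applies to step functions. -/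
noncomputable def bernsteinOperator (n : ℕ) (f : I → E) (x : I) : E :=
  ∑ k : Fin (n + 1), bernstein n k x • f (bernstein.z k)

theorem continuous_bernsteinOperator (n : ℕ) (f : I → E) : Continuous (bernsteinOperator n f) := by
  unfold bernsteinOperator
  fun_prop

theorem sub_bernsteinOperator (n : ℕ) (f : I → E) (x : I) (v : E) :
    v - bernsteinOperator n f x =
      ∑ k : Fin (n + 1), bernstein n k x • (v - f (bernstein.z k)) := by
  simp only [bernsteinOperator, smul_sub, Finset.sum_sub_distrib, ← Finset.sum_smul,
    bernstein.probability, one_smul]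

theorem norm_sub_bernsteinOperator_le_sum (n : ℕ) (f : I → E) (x : I) (v : E) :
    ‖v - bernsteinOperator n f x‖ ≤
      ∑ k : Fin (n + 1), bernstein n k x * ‖v - f (bernstein.z k)‖ := by
  rw [sub_bernsteinOperator]
  refine norm_sum_le_of_le _ fun k _ => ?_
  rw [norm_smul, Real.norm_of_nonneg bernstein_nonneg]

theorem norm_sub_bernsteinOperator_le {f : I → E} {v : E} {R : ℝ}
    (hR : ∀ y, ‖v - f y‖ ≤ R) (n : ℕ) (x : I) : ‖v - bernsteinOperator n f x‖ ≤ R :=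
  calc ‖v - bernsteinOperator n f x‖
      ≤ ∑ k : Fin (n + 1), bernstein n k x * ‖v - f (bernstein.z k)‖ :=
        norm_sub_bernsteinOperator_le_sum n f x v
    _ ≤ ∑ k : Fin (n + 1), bernstein n k x * R := by gcongr; exact hR _
    _ = R := by rw [← Finset.sum_mul, bernstein.probability, one_mul]

theorem norm_sub_bernsteinOperator_le_add_variance {f : I → E} {x : I} {v : E} {ε C : ℝ}
    (hf : ∀ y, ‖v - f y‖ ≤ ε + C * dist x y ^ 2) {n : ℕ} (hn : n ≠ 0) :
    ‖v - bernsteinOperator n f x‖ ≤ ε + C * (x * (1 - x) / n) :=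
  calc ‖v - bernsteinOperator n f x‖
      ≤ ∑ k : Fin (n + 1), bernstein n k x * ‖v - f (bernstein.z k)‖ :=
        norm_sub_bernsteinOperator_le_sum n f x v
    _ ≤ ∑ k : Fin (n + 1), bernstein n k x * (ε + C * dist x (bernstein.z k) ^ 2) := by
        gcongr; exact hf _
    _ = (∑ k : Fin (n + 1), bernstein n k x) * ε +
          C * ∑ k : Fin (n + 1), (x - bernstein.z k : ℝ) ^ 2 * bernstein n k x := by
        rw [Finset.sum_mul, Finset.mul_sum, ← Finset.sum_add_distrib]
        refine Finset.sum_congr rfl fun k _ => ?_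
        rw [Subtype.dist_eq, Real.dist_eq, sq_abs]
        ring
    _ = ε + C * (x * (1 - x) / n) := by
        rw [bernstein.probability, bernstein.variance hn, one_mul]

theorem tendsto_bernsteinOperator_of_continuousAt {f : I → E} {M : ℝ} (hM : ∀ y, ‖f y‖ ≤ M)
    {x : I} (hf : ContinuousAt f x) :
    Tendsto (fun n => bernsteinOperator n f x) atTop (nhds (f x)) := by
  refine Metric.tendsto_nhds.mpr fun ε hε => ?_
  obtain ⟨C, hC⟩ := exists_norm_sub_le_add_mul_dist_sq_of_continuousAt hf hM (half_pos hε)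
  have variance_tendsto : Tendsto (fun n : ℕ => C * ((x : ℝ) * (1 - x) / n)) atTop (nhds 0) := by
    simpa only [mul_zero] using (tendsto_const_div_atTop_nhds_zero_nat _).const_mul C
  filter_upwards [variance_tendsto.eventually_lt_const (half_pos hε), eventually_ne_atTop 0]
    with n small hn
  rw [dist_comm, dist_eq_norm]
  linarith [norm_sub_bernsteinOperator_le_add_variance hC hn]

theorem tendsto_integral_norm_sub_bernsteinOperator {Ω : Type*} [MeasurableSpace Ω]
    {μ : Measure Ω} [IsFiniteMeasure μ] {f : I → E} {M : ℝ} (hM : ∀ y, ‖f y‖ ≤ M)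
    {x : Ω → I} (hx : AEMeasurable x μ) (hf : ∀ᵐ ω ∂μ, ContinuousAt f (x ω)) :
    Tendsto (fun n => ∫ ω, ‖f (x ω) - bernsteinOperator n f (x ω)‖ ∂μ) atTop (nhds 0) := by
  have pointwise : ∀ᵐ ω ∂μ,
      Tendsto (fun n => bernsteinOperator n f (x ω)) atTop (nhds (f (x ω))) :=
    hf.mono fun ω hω => tendsto_bernsteinOperator_of_continuousAt hM hω
  have measurable_approx (n : ℕ) :
      AEStronglyMeasurable (fun ω => bernsteinOperator n f (x ω)) μ :=
    (continuous_bernsteinOperator n f).comp_aestronglyMeasurable hx.aestronglyMeasurable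
  have measurable_limit : AEStronglyMeasurable (fun ω => f (x ω)) μ :=
    aestronglyMeasurable_of_tendsto_ae atTop measurable_approx pointwise
  have increment_le (y z : I) : ‖f y - f z‖ ≤ M + M :=
    norm_sub_le_of_le (hM y) (hM z)
  rw [← integral_zero Ω ℝ (μ := μ)]
  refine tendsto_integral_of_dominated_convergence (fun _ => M + M)
    (fun n => (measurable_limit.sub (measurable_approx n)).norm) (integrable_const _)
    (fun n => .of_forall fun ω => ?_) (pointwise.mono fun ω hω => ?_)
  · rw [norm_norm]
    exact norm_sub_bernsteinOperator_le (increment_le _) n _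
  · simpa only [sub_self, norm_zero] using (hω.const_sub (f (x ω))).norm

end BernsteinOperator

section ExponentialSubstitution

open scoped unitInterval

/-- The substitution `ϱ = exp (-α * t)`, clamped to `[0, 1]` so that it is defined for all real
`α` and `t`; the clamp is inactive when `0 ≤ α * t`. -/
noncomputable def expDecay (α t : ℝ) : I :=
  Set.projIcc 0 1 zero_le_one (Real.exp (-α * t))

theorem continuous_expDecay (α : ℝ) : Continuous (expDecay α) := by
  unfold expDecay
  fun_prop

theorem coe_expDecay {α t : ℝ} (h : 0 ≤ α * t) : (expDecay α t : ℝ) = Real.exp (-α * t) := by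
  have mem : Real.exp (-α * t) ∈ I :=
    ⟨(Real.exp_pos _).le, Real.exp_le_one_iff.mpr (by linarith)⟩
  rw [expDecay, Set.projIcc_of_mem _ mem]

theorem bernsteinOperator_expDecay (n : ℕ) (ψ : ℝ → ℝ) {α t : ℝ} (h : 0 ≤ α * t) :
    bernsteinOperator n (fun y : I => ψ y) (expDecay α t) =
      ∑ k ∈ Finset.range (n + 1), (n.choose k : ℝ) * ψ ((k : ℝ) / (n : ℝ)) *
        Real.exp (-α * k * t) * (1 - Real.exp (-α * t)) ^ (n - k) := by
  rw [bernsteinOperator, Finset.sum_range]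
  refine Finset.sum_congr rfl fun k _ => ?_
  have exp_mul_eq_pow : Real.exp (-α * (k : ℕ) * t) = Real.exp (-α * t) ^ (k : ℕ) := by
    rw [← Real.exp_nat_mul]
    ring_nf
  rw [bernstein_apply, coe_expDecay h, exp_mul_eq_pow, smul_eq_mul, bernstein.z]
  ring

end ExponentialSubstitution

theorem continuousAt_ite_le {X Y : Type*} [TopologicalSpace X] [LinearOrder X]
    [OrderClosedTopology X] [TopologicalSpace Y] {c x : X} (hx : x ≠ c) (a b : Y) :
    ContinuousAt (fun y => if c ≤ y then a else b) x := by
  rcases hx.lt_or_gt with below | above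
  · refine continuousAt_const.congr (f := fun _ => b) ?_
    filter_upwards [eventually_lt_nhds below] with y hy
    exact (if_neg hy.not_ge).symm
  · refine continuousAt_const.congr (f := fun _ => a) ?_
    filter_upwards [eventually_gt_nhds above] with y hy
    exact (if_pos hy.le).symm

/-- The Bernstein-type approximants `θ_{0,n}` (built from the Bernstein polynomials of the
step function `ψ₀` composed with `ϱ = exp(-αt)`) converge in `L¹` to the indicator
kernel `θ₀` of `[0, ϑ]`. -/
theorem stmt11 (α ϑ : ℝ) (hα : 0 < α) (hϑ : 0 < ϑ)
    (ψ₀ : ℝ → ℝ)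
    (hψ₀ : ∀ ϱ : ℝ, ψ₀ ϱ = if Real.exp (-α * ϑ) ≤ ϱ then 1 else 0)
    (θ : ℕ → ℝ → ℝ)
    (hθ : ∀ (n : ℕ) (t : ℝ), θ n t =
      if t ∈ Set.Icc (0:ℝ) ϑ then
        ∑ k ∈ Finset.range (n + 1),
          (n.choose k : ℝ) * ψ₀ ((k : ℝ) / (n : ℝ)) * Real.exp (-α * k * t)
            * (1 - Real.exp (-α * t)) ^ (n - k)
      else 0) :
    Tendsto (fun n => ∫ t in (0:ℝ)..ϑ, |1 - θ n t|) atTop (nhds 0) := by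
  have coe_eq {t : ℝ} (ht : t ∈ Set.Ioc 0 ϑ) : (expDecay α t : ℝ) = Real.exp (-α * t) :=
    coe_expDecay (mul_pos hα ht.1).le
  have ψ₀_bounded (y : unitInterval) : ‖ψ₀ y‖ ≤ 1 := by
    rw [hψ₀]; split_ifs <;> simp
  have ψ₀_continuousAt : ∀ᵐ t ∂volume.restrict (Set.Ioc 0 ϑ),
      ContinuousAt (fun y : unitInterval => ψ₀ y) (expDecay α t) := by
    filter_upwards [ae_restrict_mem measurableSet_Ioc, Measure.ae_ne _ ϑ] with t ht hne
    have off_jump : (expDecay α t : ℝ) ≠ Real.exp (-α * ϑ) := by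
      simpa [coe_eq ht, hα.ne'] using hne
    simpa only [← hψ₀, Function.comp_def] using (continuousAt_ite_le off_jump (1 : ℝ) 0).comp
      continuous_subtype_val.continuousAt
  refine (tendsto_integral_norm_sub_bernsteinOperator ψ₀_bounded
    (continuous_expDecay α).aemeasurable ψ₀_continuousAt).congr fun n => ?_
  rw [integral_of_le hϑ.le]
  refine setIntegral_congr_fun measurableSet_Ioc fun t ht => ?_
  have ψ₀_eq_one : ψ₀ (expDecay α t) = 1 := by
    rw [hψ₀, coe_eq ht, if_pos (Real.exp_le_exp.mpr (by nlinarith [ht.2]))]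
  rw [bernsteinOperator_expDecay n ψ₀ (mul_pos hα ht.1).le, ψ₀_eq_one, hθ,
    if_pos (Set.Ioc_subset_Icc_self ht), Real.norm_eq_abs]
end

section
/- Let α > 0, ϑ > 0 and λ ∈ ℂ. Define Φ_λ : [0, 1] → ℂ by Φ_λ(μ) = exp(λ · (−α^{-1} ln((1 − exp(−αϑ))μ + exp(−αϑ)))), and for each n ∈ ℕ define θ_{λ,n} : [0, ϑ] → ℂ by θ_{λ,n}(t) = (1 − exp(−αϑ))^{−n} Σ_{k=0}^{n} C(n,k) Φ_λ(k/n) (exp(−αt) − exp(−αϑ))^k (1 − exp(−αt))^{n−k}, where C(n,k) is the binomial coefficient. Then θ_{λ,n} converges uniformly on [0, ϑ] to t ↦ exp(λ t), i.e., sup_{t ∈ [0,ϑ]} |exp(λ t) − θ_{λ,n}(t)| → 0 as n → ∞. -/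
open Complex Filter

/-!
In the variable `y = exp (-α t)` the approximant `θ_{λ,n}` is the Bernstein polynomial of
`y ↦ exp (λ (-α⁻¹ log y))` on the interval between `exp (-α ϑ)` and `1`. This function is
continuous there because the interval avoids `0`, so Bernstein's theorem, transported from `[0, 1]`
by an affine map, gives uniform convergence, and composing with `t ↦ exp (-α t)` preserves it.
-/

section Bernstein

variable {E : Type*} [AddCommGroup E] [Module ℝ E]

/-- The `n`-th Bernstein polynomial of `f` relative to the interval with endpoints `a` and `b`,
in either order, written homogeneously in `x - a` and `b - x`. For `a = b` and `n ≠ 0` it is `0`. -/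
noncomputable def intervalBernstein (a b : ℝ) (n : ℕ) (f : ℝ → E) (x : ℝ) : E :=
  ((b - a) ^ n)⁻¹ • ∑ k ∈ Finset.range (n + 1),
    (n.choose k * (x - a) ^ k * (b - x) ^ (n - k)) • f ((b - a) * (k / n) + a)

theorem inv_pow_mul_bernstein_scaled {c : ℝ} (hc : c ≠ 0) {n k : ℕ} (hk : k ≤ n)
    (s : unitInterval) :
    (c ^ n)⁻¹ * (n.choose k * (c * s) ^ k * (c * (1 - s)) ^ (n - k)) = bernstein n k s := by
  rw [bernstein_apply, ← pow_mul_pow_sub c hk, mul_pow, mul_pow]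
  field_simp [hc]

theorem intervalBernstein_complex (a b : ℝ) (n : ℕ) (f : ℝ → ℂ) (x : ℝ) :
    intervalBernstein a b n f x =
      (((b - a) ^ n : ℝ) : ℂ)⁻¹ * ∑ k ∈ Finset.range (n + 1),
        (n.choose k : ℂ) * f ((b - a) * (k / n) + a) * ((x - a : ℝ) : ℂ) ^ k *
          ((b - x : ℝ) : ℂ) ^ (n - k) := by
  rw [intervalBernstein, Complex.real_smul, Complex.ofReal_inv]
  refine congrArg _ (Finset.sum_congr rfl fun k _ => ?_)
  rw [Complex.real_smul]
  push_cast
  ring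

variable [TopologicalSpace E] [IsTopologicalAddGroup E] [ContinuousSMul ℝ E]

theorem intervalBernstein_eq_bernsteinApproximation {a b : ℝ} (hab : a ≠ b) (n : ℕ) {f : ℝ → E}
    {F : C(unitInterval, E)} (hF : ∀ s : unitInterval, F s = f ((b - a) * s + a))
    (s : unitInterval) :
    intervalBernstein a b n f ((b - a) * s + a) = bernsteinApproximation n F s := by
  have hleft : (b - a) * s + a - a = (b - a) * s := by ring
  have hright : b - ((b - a) * s + a) = (b - a) * (1 - s) := by ring
  rw [intervalBernstein, bernsteinApproximation.apply, Finset.sum_range, Finset.smul_sum]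
  refine Finset.sum_congr rfl fun k _ => ?_
  rw [smul_smul, hleft, hright, inv_pow_mul_bernstein_scaled (sub_ne_zero.2 hab.symm) k.is_le, hF]
  rfl

end Bernstein

theorem image_affine_unitInterval (a b : ℝ) :
    (fun s => (b - a) * s + a) '' unitInterval = Set.uIcc a b := by
  rw [← segment_eq_uIcc, segment_eq_image_lineMap]
  refine Set.image_congr fun s _ => ?_
  rw [AffineMap.lineMap_apply_ring', mul_comm]

section Convergence

variable {E : Type*} [AddCommGroup E] [Module ℝ E] [UniformSpace E] [IsTopologicalAddGroup E]
  [ContinuousSMul ℝ E] [LocallyConvexSpace ℝ E]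

theorem tendstoUniformlyOn_intervalBernstein {a b : ℝ} (hab : a ≠ b) {f : ℝ → E}
    (hf : ContinuousOn f (Set.uIcc a b)) :
    TendstoUniformlyOn (fun n => intervalBernstein a b n f) f atTop (Set.uIcc a b) := by
  rw [← image_affine_unitInterval] at hf ⊢
  let F : C(unitInterval, E) := ⟨fun s => f ((b - a) * s + a),
    hf.comp_continuous (by fun_prop) fun s => Set.mem_image_of_mem _ s.2⟩
  have hF : TendstoUniformly (fun n => ⇑(bernsteinApproximation n F)) F atTop :=
    ContinuousMap.tendsto_iff_tendstoUniformly.1 (bernsteinApproximation_uniform F)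
  intro u hu
  filter_upwards [hF u hu] with n hn
  rintro _ ⟨s, hs, rfl⟩
  have hFs := hn ⟨s, hs⟩
  rwa [← intervalBernstein_eq_bernsteinApproximation hab n (fun _ => rfl)] at hFs

end Convergence

theorem mapsTo_const_mul_uIcc {K : Type*} [Field K] [LinearOrder K] [IsStrictOrderedRing K]
    (c a b : K) :
    Set.MapsTo (c * ·) (Set.uIcc a b) (Set.uIcc (c * a) (c * b)) :=
  Set.mapsTo_iff_image_subset.2 (Set.image_const_mul_uIcc c a b).subset

theorem mapsTo_exp_const_mul_uIcc (c a b : ℝ) :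
    Set.MapsTo (fun t => Real.exp (c * t)) (Set.uIcc a b)
      (Set.uIcc (Real.exp (c * a)) (Real.exp (c * b))) :=
  Real.exp_monotone.mapsTo_uIcc.comp (mapsTo_const_mul_uIcc c a b)

theorem uIcc_subset_Ioi {β : Type*} [LinearOrder β] {c x y : β} (hx : c < x) (hy : c < y) :
    Set.uIcc x y ⊆ Set.Ioi c :=
  Set.ordConnected_Ioi.uIcc_subset hx hy

theorem mapsTo_const_mul_log_uIcc (c : ℝ) {x y : ℝ} (hx : 0 < x) (hy : 0 < y) :
    Set.MapsTo (fun z => c * Real.log z) (Set.uIcc x y)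
      (Set.uIcc (c * Real.log x) (c * Real.log y)) :=
  (mapsTo_const_mul_uIcc c _ _).comp
    (Real.strictMonoOn_log.monotoneOn.mono (uIcc_subset_Ioi hx hy)).mapsTo_uIcc

theorem continuousOn_const_mul_log_uIcc (c : ℝ) {x y : ℝ} (hx : 0 < x) (hy : 0 < y) :
    ContinuousOn (fun z => c * Real.log z) (Set.uIcc x y) :=
  continuousOn_const.mul <| Real.continuousOn_log.mono fun _ hz =>
    (uIcc_subset_Ioi hx hy hz).ne'

theorem neg_inv_mul_log_exp_neg_mul {α : ℝ} (hα : α ≠ 0) (t : ℝ) :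
    -α⁻¹ * Real.log (Real.exp (-α * t)) = t := by
  rw [Real.log_exp, neg_mul, neg_mul, mul_neg, neg_neg, inv_mul_cancel_left₀ hα]

theorem stmt12_general {E : Type*} [AddCommGroup E] [Module ℝ E] [UniformSpace E]
    [IsTopologicalAddGroup E] [ContinuousSMul ℝ E] [LocallyConvexSpace ℝ E]
    {α ϑ : ℝ} (hα : α ≠ 0) (hϑ : ϑ ≠ 0) {g : ℝ → E} (hg : ContinuousOn g (Set.uIcc 0 ϑ)) :
    TendstoUniformlyOn
      (fun n t => intervalBernstein (Real.exp (-α * ϑ)) 1 n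
        (fun y => g (-α⁻¹ * Real.log y)) (Real.exp (-α * t)))
      g atTop (Set.uIcc 0 ϑ) := by
  have hne : Real.exp (-α * ϑ) ≠ 1 :=
    Real.exp_eq_one_iff _ |>.not.2 (mul_ne_zero (neg_ne_zero.2 hα) hϑ)
  have hlog : Set.MapsTo (fun y => -α⁻¹ * Real.log y) (Set.uIcc (Real.exp (-α * ϑ)) 1)
      (Set.uIcc 0 ϑ) := by
    simpa only [neg_inv_mul_log_exp_neg_mul hα, Real.log_one, mul_zero, Set.uIcc_comm ϑ] using
      mapsTo_const_mul_log_uIcc (-α⁻¹) (Real.exp_pos (-α * ϑ)) one_pos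
  have hexp : Set.MapsTo (fun t => Real.exp (-α * t)) (Set.uIcc 0 ϑ)
      (Set.uIcc (Real.exp (-α * ϑ)) 1) := by
    simpa only [mul_zero, Real.exp_zero, Set.uIcc_comm _ (1 : ℝ)] using
      mapsTo_exp_const_mul_uIcc (-α) 0 ϑ
  have hcont : ContinuousOn (fun y => g (-α⁻¹ * Real.log y)) (Set.uIcc (Real.exp (-α * ϑ)) 1) :=
    hg.comp (continuousOn_const_mul_log_uIcc _ (Real.exp_pos _) one_pos) hlog
  have hlim := ((tendstoUniformlyOn_intervalBernstein hne hcont).comp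
    (fun t => Real.exp (-α * t))).mono hexp
  exact hlim.congr_right fun t _ => congrArg g (neg_inv_mul_log_exp_neg_mul hα t)

/-- The Bernstein approximants `θ_{λ,n}` of `Φ_λ`, evaluated at
`μ(t) = (exp(-αt) - exp(-αϑ))/(1 - exp(-αϑ))`, converge uniformly on `[0, ϑ]` to the
elementary distributed-delay kernel `t ↦ exp(λ t)`. -/
theorem stmt12 (α ϑ : ℝ) (hα : 0 < α) (hϑ : 0 < ϑ) (lam : ℂ)
    (Φ : ℝ → ℂ)
    (hΦ : ∀ μ : ℝ, Φ μ = Complex.exp (lam *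
      ((-α⁻¹ * Real.log ((1 - Real.exp (-α * ϑ)) * μ + Real.exp (-α * ϑ)) : ℝ) : ℂ)))
    (θ : ℕ → ℝ → ℂ)
    (hθ : ∀ (n : ℕ) (t : ℝ), θ n t =
      (((1 - Real.exp (-α * ϑ)) ^ n : ℝ) : ℂ)⁻¹ *
        ∑ k ∈ Finset.range (n + 1),
          (n.choose k : ℂ) * Φ ((k : ℝ) / (n : ℝ))
            * (((Real.exp (-α * t) - Real.exp (-α * ϑ) : ℝ) : ℂ)) ^ k
            * (((1 - Real.exp (-α * t) : ℝ) : ℂ)) ^ (n - k)) :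
    TendstoUniformlyOn (fun n t => θ n t) (fun t => Complex.exp (lam * t)) atTop
      (Set.Icc (0:ℝ) ϑ) := by
  rw [← Set.uIcc_of_le hϑ.le]
  refine (stmt12_general hα.ne' hϑ.ne' (g := fun t => Complex.exp (lam * t)) (by fun_prop)).congr
    (.of_forall fun n t _ => ?_)
  simp only [intervalBernstein_complex, hθ, hΦ]
end

section
/- Let A be a commutative unital Banach algebra (complete normed ring with submultiplicative norm and ‖1‖ = 1). Let n, d, n_c, d_c ∈ A satisfy the Bézout identity n · n_c + d · d_c = 1, and let n_c', d_c' ∈ A with ‖n_c − n_c'‖ ≤ ε_n and ‖d_c − d_c'‖ ≤ ε_d for nonnegative reals ε_n, ε_d. If max(ε_n, ε_d) · (‖n‖ + ‖d‖) < 1, then n · n_c' + d · d_c' is invertible in A. (Applied to the convolution algebra of BIBO-stable systems, this says the approximated compensator with factorization (n_c', d_c') still stabilizes the plant with coprime factorization (n, d).) -/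
theorem norm_mul_add_mul_le_max_mul {R : Type*} [NonUnitalSeminormedRing R] (a b x y : R) :
    ‖a * x + b * y‖ ≤ max ‖x‖ ‖y‖ * (‖a‖ + ‖b‖) :=
  calc
    ‖a * x + b * y‖ ≤ ‖a‖ * ‖x‖ + ‖b‖ * ‖y‖ :=
      norm_add_le_of_le (norm_mul_le a x) (norm_mul_le b y)
    _ ≤ ‖a‖ * max ‖x‖ ‖y‖ + ‖b‖ * max ‖x‖ ‖y‖ := by
      gcongr
      · exact le_max_left _ _
      · exact le_max_right _ _
    _ = max ‖x‖ ‖y‖ * (‖a‖ + ‖b‖) := by ring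

theorem stmt14_general {A : Type*} [NormedRing A] [HasSummableGeomSeries A]
    (n d nc dc nc' dc' : A) (εn εd : ℝ)
    (hbez : n * nc + d * dc = 1)
    (hn : ‖nc - nc'‖ ≤ εn) (hd : ‖dc - dc'‖ ≤ εd)
    (hsmall : max εn εd * (‖n‖ + ‖d‖) < 1) :
    IsUnit (n * nc' + d * dc') := by
  have one_sub_error :
      1 - (n * (nc - nc') + d * (dc - dc')) = n * nc' + d * dc' := by
    rw [← hbez]
    noncomm_ring
  have error_lt_one : ‖n * (nc - nc') + d * (dc - dc')‖ < 1 :=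
    calc
      ‖n * (nc - nc') + d * (dc - dc')‖
          ≤ max ‖nc - nc'‖ ‖dc - dc'‖ * (‖n‖ + ‖d‖) := norm_mul_add_mul_le_max_mul ..
      _ ≤ max εn εd * (‖n‖ + ‖d‖) := by gcongr
      _ < 1 := hsmall
  exact one_sub_error ▸ isUnit_one_sub_of_norm_lt_one error_lt_one

/-- Robust stabilization in a commutative unital Banach algebra: if `n·n_c + d·d_c = 1`
and `(n_c', d_c')` approximate `(n_c, d_c)` with `max(ε_n, ε_d)·(‖n‖ + ‖d‖) < 1`, then
`n·n_c' + d·d_c'` is a unit, i.e. the approximated compensator still stabilizes the plant. -/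
theorem stmt14 {A : Type*} [NormedCommRing A] [NormOneClass A] [CompleteSpace A]
    (n d nc dc nc' dc' : A) (εn εd : ℝ) (hεn : 0 ≤ εn) (hεd : 0 ≤ εd)
    (hbez : n * nc + d * dc = 1)
    (hn : ‖nc - nc'‖ ≤ εn) (hd : ‖dc - dc'‖ ≤ εd)
    (hsmall : max εn εd * (‖n‖ + ‖d‖) < 1) :
    IsUnit (n * nc' + d * dc') :=
  stmt14_general n d nc dc nc' dc' εn εd hbez hn hd hsmall
end

section
/- Let a > 0, λ ∈ ℂ, ϑ > 0 and ε > 0. Then there exist n ∈ ℕ, n ≥ 1, and coefficients γ₀, …, γ_n ∈ ℂ such that ∫₀^∞ | θ_λ(t) − Σ_{i=0}^{n} γ_i exp(−a(t − i ϑ/n)) · 1_{[i ϑ/n, ∞)}(t) | dt ≤ ε, where 1_{[c,∞)} denotes the indicator function of [c, ∞). That is, the elementary distributed-delay kernel can be approximated in L¹-norm by a finite sum of time-shifted first-order low-pass (decaying exponential) responses, which corresponds in the Laplace domain to an approximation of the form (s + a)^{-1} Σ_i γ_i exp(−s t_i) with lumped delays t_i = i ϑ/n. -/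
open Complex MeasureTheory

/-!
At each node `sₖ = k ϑ / n` with `k < n` an impulse resets the response of the filter to the value
`f sₖ` of the target, after which it evolves as `f sₖ * exp (-a (t - sₖ))` up to the next node; the
last impulse resets it to zero, so the response vanishes identically after `ϑ`. On `[sₖ, sₖ₊₁)` the
error is `exp (-a t) * (g t - g sₖ)` with `g t = exp (a t) * f t`, which is uniformly small for
large `n` because `g` is uniformly continuous on `[0, ϑ]`.
-/

/-- The `i`-th of the `n + 1` equidistant nodes of `[0, ϑ]`, the lumped delay `i ϑ / n`. -/
noncomputable def gridPoint (ϑ : ℝ) (n i : ℕ) : ℝ := (i : ℝ) * ϑ / n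

/-- The response of the first-order filter with transfer function `1 / (s + a)` to `n + 1` impulses,
the `i`-th one being applied at time `s i` with weight `γ i`. -/
noncomputable def impulseTrainResponse (a : ℂ) (s : ℕ → ℝ) (γ : ℕ → ℂ) (n : ℕ) (t : ℝ) : ℂ :=
  ∑ i ∈ Finset.range (n + 1), γ i * exp (-a * ((t : ℂ) - s i)) * (if s i ≤ t then 1 else 0)

/-- The impulse weights that reset the response of the filter `1 / (s + a)` to the value `v i` at
each time `s i`: the prescribed value minus what is left there of the previous one. -/
noncomputable def resetWeight (a : ℂ) (s : ℕ → ℝ) (v : ℕ → ℂ) : ℕ → ℂ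
  | 0 => v 0
  | i + 1 => v (i + 1) - v i * exp (-a * ((s (i + 1) : ℂ) - s i))

section Grid

variable {ϑ : ℝ} {n : ℕ}

lemma gridPoint_zero : gridPoint ϑ n 0 = 0 := by simp [gridPoint]

lemma gridPoint_self (hn : n ≠ 0) : gridPoint ϑ n n = ϑ :=
  mul_div_cancel_left₀ ϑ (Nat.cast_ne_zero.2 hn)

lemma gridPoint_succ (i : ℕ) : gridPoint ϑ n (i + 1) = gridPoint ϑ n i + ϑ / n := by
  simp only [gridPoint, Nat.cast_succ]
  ring

lemma gridPoint_mono (hϑ : 0 ≤ ϑ) : Monotone (gridPoint ϑ n) := fun i j hij ↦ by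
  unfold gridPoint
  gcongr

lemma Ico_gridPoint_subset_Icc (hϑ : 0 ≤ ϑ) {k : ℕ} (hk : k < n) :
    Set.Ico (gridPoint ϑ n k) (gridPoint ϑ n (k + 1)) ⊆ Set.Icc 0 ϑ := by
  have h_left : gridPoint ϑ n 0 ≤ gridPoint ϑ n k := gridPoint_mono hϑ k.zero_le
  have h_right : gridPoint ϑ n (k + 1) ≤ gridPoint ϑ n n := gridPoint_mono hϑ hk
  rw [gridPoint_zero] at h_left
  rw [gridPoint_self (Nat.ne_zero_of_lt hk)] at h_right
  exact Set.Ico_subset_Icc_self.trans (Set.Icc_subset_Icc h_left h_right)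

lemma exists_forall_dist_gridPoint_lt {X : Type*} [PseudoMetricSpace X] {g : ℝ → X} (hϑ : 0 < ϑ)
    (hg : ContinuousOn g (Set.Icc 0 ϑ)) {η : ℝ} (hη : 0 < η) :
    ∃ n : ℕ, 1 ≤ n ∧ ∀ k < n, ∀ t ∈ Set.Ico (gridPoint ϑ n k) (gridPoint ϑ n (k + 1)),
      dist (g t) (g (gridPoint ϑ n k)) < η := by
  obtain ⟨δ, hδ, h_dist⟩ := Metric.uniformContinuousOn_iff.1
    (isCompact_Icc.uniformContinuousOn_of_continuous hg) η hη
  obtain ⟨n, hn⟩ := exists_nat_gt (ϑ / δ)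
  have hn_pos : (0 : ℝ) < n := (div_pos hϑ hδ).trans hn
  have h_mesh : ϑ / n < δ := (div_lt_comm₀ hδ hn_pos).1 hn
  refine ⟨n, Nat.cast_pos.1 hn_pos, fun k hk t ht ↦ ?_⟩
  have ht_lt : t < gridPoint ϑ n k + ϑ / n := gridPoint_succ (ϑ := ϑ) k ▸ ht.2
  have h_subset := Ico_gridPoint_subset_Icc hϑ.le hk
  refine h_dist t (h_subset ht) _ (h_subset ⟨le_rfl, ht.1.trans_lt ht.2⟩) ?_
  rw [Real.dist_eq, abs_of_nonneg (sub_nonneg.2 ht.1)]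
  linarith

end Grid

lemma exists_lt_mem_Ico_succ {α : Type*} [LinearOrder α] {s : ℕ → α} {t : α} {n : ℕ}
    (ht : t ∈ Set.Ico (s 0) (s n)) : ∃ k < n, t ∈ Set.Ico (s k) (s (k + 1)) := by
  induction n with
  | zero => exact absurd ht.2 ht.1.not_gt
  | succ n ih =>
    rcases lt_or_ge t (s n) with h_lt | h_ge
    · obtain ⟨k, hk, ht_mem⟩ := ih ⟨ht.1, h_lt⟩
      exact ⟨k, hk.trans n.lt_succ_self, ht_mem⟩
    · exact ⟨n, n.lt_succ_self, h_ge, ht.2⟩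

section Response

variable {a : ℂ} {s : ℕ → ℝ} {n k : ℕ} {t : ℝ}

lemma impulseTrainResponse_eq_sum_range (γ : ℕ → ℂ) (hs : Monotone s) (hkn : k ≤ n)
    (hkt : s k ≤ t) (htk : k < n → t < s (k + 1)) :
    impulseTrainResponse a s γ n t =
      ∑ i ∈ Finset.range (k + 1), γ i * exp (-a * ((t : ℂ) - s i)) := by
  unfold impulseTrainResponse
  rw [← Finset.sum_subset (Finset.range_mono (Nat.succ_le_succ hkn))]
  · refine Finset.sum_congr rfl fun i hi ↦ ?_
    have hi_le : s i ≤ t := (hs (Finset.mem_range_succ_iff.1 hi)).trans hkt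
    rw [if_pos hi_le, mul_one]
  · intro i hin hik
    rw [Finset.mem_range] at hin hik
    have hi_gt : t < s i := (htk (by lia)).trans_le (hs (by lia))
    rw [if_neg hi_gt.not_ge, mul_zero]

lemma sum_resetWeight_mul_exp (v : ℕ → ℂ) (k : ℕ) :
    ∑ i ∈ Finset.range (k + 1), resetWeight a s v i * exp (-a * ((t : ℂ) - s i)) =
      v k * exp (-a * ((t : ℂ) - s k)) := by
  induction k with
  | zero => simp [resetWeight]
  | succ k ih =>
    have h_exp : exp (-a * ((t : ℂ) - s k)) =
        exp (-a * ((s (k + 1) : ℂ) - s k)) * exp (-a * ((t : ℂ) - s (k + 1))) := by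
      rw [← exp_add]
      ring_nf
    rw [Finset.sum_range_succ, ih, h_exp, resetWeight]
    ring

lemma impulseTrainResponse_resetWeight (v : ℕ → ℂ) (hs : Monotone s) (hkn : k ≤ n)
    (hkt : s k ≤ t) (htk : k < n → t < s (k + 1)) :
    impulseTrainResponse a s (resetWeight a s v) n t = v k * exp (-a * ((t : ℂ) - s k)) := by
  rw [impulseTrainResponse_eq_sum_range _ hs hkn hkt htk, sum_resetWeight_mul_exp]

end Response

lemma norm_sub_mul_exp_le (a : ℂ) (f : ℝ → ℂ) {ϑ t : ℝ} (ht : t ∈ Set.Icc 0 ϑ) (u : ℝ) :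
    ‖f t - f u * exp (-a * ((t : ℂ) - u))‖ ≤
      Real.exp (‖a‖ * ϑ) * dist (exp (a * t) * f t) (exp (a * u) * f u) := by
  have h_factor : f t - f u * exp (-a * ((t : ℂ) - u)) =
      exp (-a * t) * (exp (a * t) * f t - exp (a * u) * f u) := by
    have h_cancel : exp (-a * t) * exp (a * t) = 1 := by rw [← exp_add]; simp
    have h_split : exp (-a * ((t : ℂ) - u)) = exp (-a * t) * exp (a * u) := by
      rw [← exp_add]
      ring_nf
    linear_combination (-f t) * h_cancel - f u * h_split
  have h_exp : ‖exp (-a * t)‖ ≤ Real.exp (‖a‖ * ϑ) := by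
    refine (norm_exp_le_exp_norm _).trans (Real.exp_le_exp.2 ?_)
    rw [norm_mul, norm_neg, norm_real, Real.norm_of_nonneg ht.1]
    exact mul_le_mul_of_nonneg_left ht.2 (norm_nonneg a)
  rw [h_factor, norm_mul, dist_eq_norm]
  exact mul_le_mul_of_nonneg_right h_exp (norm_nonneg _)

lemma setIntegral_Ioi_norm_le_of_eq_zero {E : Type*} [NormedAddCommGroup E] {F : ℝ → E}
    {b c C : ℝ} (hbc : b ≤ c) (h_le : ∀ t ∈ Set.Ioo b c, ‖F t‖ ≤ C)
    (h_zero : ∀ t, c < t → F t = 0) : ∫ t in Set.Ioi b, ‖F t‖ ≤ C * (c - b) := by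
  have h_restrict : ∫ t in Set.Ioi b, ‖F t‖ = ∫ t in Set.Ioo b c, ‖F t‖ := by
    rw [← integral_Ioc_eq_integral_Ioo]
    refine setIntegral_eq_of_subset_of_forall_sdiff_eq_zero measurableSet_Ioi
      Set.Ioc_subset_Ioi_self fun t ht ↦ ?_
    rw [h_zero t (not_le.1 fun htc ↦ ht.2 ⟨ht.1, htc⟩), norm_zero]
  calc ∫ t in Set.Ioi b, ‖F t‖ = ∫ t in Set.Ioo b c, ‖F t‖ := h_restrict
    _ ≤ ‖∫ t in Set.Ioo b c, ‖F t‖‖ := Real.le_norm_self _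
    _ ≤ C * volume.real (Set.Ioo b c) :=
      norm_setIntegral_le_of_norm_le_const (by simp) fun t ht ↦ by simpa using h_le t ht
    _ = C * (c - b) := by rw [Real.volume_real_Ioo_of_le hbc]

lemma exists_impulseTrainResponse_uniform_approx (a : ℂ) {f : ℝ → ℂ} {ϑ η : ℝ} (hϑ : 0 < ϑ)
    (hf : ContinuousOn f (Set.Icc 0 ϑ)) (hη : 0 < η) :
    ∃ n : ℕ, 1 ≤ n ∧ ∃ γ : ℕ → ℂ,
      (∀ t ∈ Set.Ico 0 ϑ, ‖f t - impulseTrainResponse a (gridPoint ϑ n) γ n t‖ ≤ η) ∧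
        ∀ t, ϑ ≤ t → impulseTrainResponse a (gridPoint ϑ n) γ n t = 0 := by
  have hg : ContinuousOn (fun t : ℝ ↦ exp (a * t) * f t) (Set.Icc 0 ϑ) := by fun_prop
  obtain ⟨n, hn, h_dist⟩ := exists_forall_dist_gridPoint_lt hϑ hg
    (div_pos hη (Real.exp_pos (‖a‖ * ϑ)))
  have h_mono : Monotone (gridPoint ϑ n) := gridPoint_mono hϑ.le
  have h_last : gridPoint ϑ n n = ϑ := gridPoint_self (Nat.one_le_iff_ne_zero.1 hn)
  let v : ℕ → ℂ := fun k ↦ if k < n then f (gridPoint ϑ n k) else 0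
  refine ⟨n, hn, resetWeight a (gridPoint ϑ n) v, fun t ht ↦ ?_, fun t ht ↦ ?_⟩
  · obtain ⟨k, hk, htk⟩ : ∃ k < n, t ∈ Set.Ico (gridPoint ϑ n k) (gridPoint ϑ n (k + 1)) :=
      exists_lt_mem_Ico_succ (by rwa [gridPoint_zero, h_last])
    have hv : v k = f (gridPoint ϑ n k) := if_pos hk
    rw [impulseTrainResponse_resetWeight v h_mono hk.le htk.1 fun _ ↦ htk.2, hv]
    refine (norm_sub_mul_exp_le a f ⟨ht.1, ht.2.le⟩ _).trans ?_
    exact (le_div_iff₀' (Real.exp_pos _)).1 (h_dist k hk t htk).le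
  · have hv : v n = 0 := if_neg (lt_irrefl n)
    rw [impulseTrainResponse_resetWeight v h_mono le_rfl (h_last.trans_le ht)
      fun h ↦ absurd h (lt_irrefl n), hv, zero_mul]

theorem stmt15_general (a : ℂ) {f : ℝ → ℂ} {ϑ ε : ℝ} (hϑ : 0 < ϑ)
    (hf : ContinuousOn f (Set.Icc 0 ϑ)) (hε : 0 < ε) :
    ∃ n : ℕ, 1 ≤ n ∧ ∃ γ : ℕ → ℂ,
      ∫ t in Set.Ioi (0 : ℝ), ‖(if t ∈ Set.Icc (0 : ℝ) ϑ then f t else 0) -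
        impulseTrainResponse a (gridPoint ϑ n) γ n t‖ ≤ ε := by
  obtain ⟨n, hn, γ, h_approx, h_zero⟩ :=
    exists_impulseTrainResponse_uniform_approx a hϑ hf (div_pos hε hϑ)
  refine ⟨n, hn, γ, (setIntegral_Ioi_norm_le_of_eq_zero hϑ.le (C := ε / ϑ) (fun t ht ↦ ?_)
    fun t ht ↦ ?_).trans_eq (by rw [sub_zero, div_mul_cancel₀ ε hϑ.ne'])⟩
  · rw [if_pos (Set.Ioo_subset_Icc_self ht)]
    exact h_approx t (Set.Ioo_subset_Ico_self ht)
  · rw [if_neg fun h ↦ h.2.not_gt ht, h_zero t ht.le, sub_zero]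

/-- The elementary distributed-delay kernel `θ_λ` can be approximated in `L¹`-norm by a
finite sum of time-shifted first-order low-pass responses
`t ↦ γᵢ exp(-a(t - iϑ/n))·1_{[iϑ/n,∞)}(t)` (Laplace domain:
`(s+a)⁻¹ Σ γᵢ exp(-s·iϑ/n)`). -/
theorem stmt15 (a : ℝ) (ha : 0 < a) (lam : ℂ) (ϑ : ℝ) (hϑ : 0 < ϑ)
    (ε : ℝ) (hε : 0 < ε) :
    ∃ (n : ℕ), 1 ≤ n ∧ ∃ γ : ℕ → ℂ,
      (∫ t in Set.Ioi (0:ℝ),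
        ‖(if t ∈ Set.Icc (0:ℝ) ϑ then Complex.exp (lam * t) else 0)
          - ∑ i ∈ Finset.range (n + 1),
              γ i * Complex.exp (-(a : ℂ) * ((t : ℂ) - ((i : ℝ) * ϑ / n : ℝ)))
                * (if ((i : ℝ) * ϑ / n : ℝ) ≤ t then 1 else 0)‖) ≤ ε :=
  stmt15_general a (f := fun t ↦ exp (lam * t)) hϑ (by fun_prop) hε
end
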